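/- arXiv:1012.0023 — 7 statements merged into one kernel-verified Lean document; each statement's English description precedes it below -/
import Mathlib

section
/- Every k-rated linear grammar, where k = g/h with g, h ∈ ℕ coprime and h ≠ 0, has an equivalent grammar (generating the same language up to the empty word) in which every production of the form A → v B w satisfies |w| = g and |v| = h, and every terminating production of the form A → u with u a word of terminals satisfies |u| < g + h. -/
/-!
The nonterminals of the new grammar are languages.  Fix a finite family `F` of languages and allow
every production `L → u` with `u ∈ L`, `|u| < g + h`, and every production `L → v L' w` with
`|v| = h`, `|w| = g` that is *sound*, meaning `v L' w ⊆ L`.  Soundness makes each nonterminal `L`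
derive only words of `L`.  Conversely `L` derives all its words as soon as every `p ∈ L` with
`|p| ≥ g + h` can be peeled: `p = v p' w` with `p' ∈ L' ∈ F` for some sound production
(`exists_normal_of_peelable`).  Only finitely many letters occur in the rules, so there are only
finitely many such productions.

For a rated grammar, `F` consists of the language of the start symbol, the singletons `{q}` with
`q` a sublist of the right-hand side of some terminating rule, and the languages `a L(B) b` with
`a`, `b` sublists of `u`, `w` for some rule `A → u B w` and `h |b| = g |a|` (`pieces`).  If `a` is
nonempty, coprimality gives `|a| ≥ h` and `|b| ≥ g`, so `h` letters can be peeled off on the left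
and `g` on the right (`split_rated`).  If `a` is empty, so is `b`, and a word of `L(B)` is peeled by
induction on its derivation (`peels_derived`); chains of unit rules `A → B` are absorbed there,
since `L(B) ⊆ L(A)`.
-/

/-- The `i`-fold repetition `v^i` of a word `v`. -/
def wordPow {T : Type} (v : List T) : ℕ → List T
  | 0 => []
  | n + 1 => v ++ wordPow v n

/-- A production of a linear grammar: either `A → u` (with `u` a terminal word)
or `A → u B w` (with `u, w` terminal words and `B` a nonterminal). -/
structure LinearRule (T N : Type) where
  input : N
  output : List T ⊕ (List T × N × List T)

/-- `LinDerives rs A p` : from nonterminal `A`, the linear productions in `rs`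
derive the terminal word `p`. -/
inductive LinDerives {T N : Type} (rs : List (LinearRule T N)) : N → List T → Prop
  | terminal {A : N} {u : List T} (hr : (⟨A, Sum.inl u⟩ : LinearRule T N) ∈ rs) :
      LinDerives rs A u
  | step {A B : N} {u w p : List T}
      (hr : (⟨A, Sum.inr (u, B, w)⟩ : LinearRule T N) ∈ rs)
      (hp : LinDerives rs B p) :
      LinDerives rs A (u ++ p ++ w)

/-- A linear grammar: a type of nonterminals, a start symbol, and a
finite list of linear productions. -/
structure LinearGrammar (T : Type) where
  NT : Type
  start : NT
  rules : List (LinearRule T NT)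

/-- The language generated by a linear grammar. -/
def LinearGrammar.language {T : Type} (G : LinearGrammar T) : Set (List T) :=
  {p | LinDerives G.rules G.start p}

/-- A linear grammar is `(g/h)`-rated linear (`k = g/h`) if every production
`A → u B w` satisfies `h * |w| = g * |u|`. -/
def LinearGrammar.IsRated {T : Type} (g h : ℕ) (G : LinearGrammar T) : Prop :=
  ∀ r ∈ G.rules, ∀ u w, ∀ B : G.NT, r.output = Sum.inr (u, B, w) →
    h * w.length = g * u.length

/-- A grammar generates exactly the language `L`, up to the empty word. -/
def LinearGrammar.GeneratesModEmpty {T : Type} (G : LinearGrammar T) (L : Set (List T)) :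
    Prop :=
  ∀ p : List T, p ≠ [] → (p ∈ L ↔ p ∈ G.language)

/-- A language is linear if some linear grammar generates it, up to the empty word. -/
def IsLinearLang {T : Type} (L : Set (List T)) : Prop :=
  ∃ G : LinearGrammar T, G.GeneratesModEmpty L

/-- A language is `(g/h)`-rated linear if some `(g/h)`-rated linear grammar
generates it, up to the empty word. -/
def IsRatedLinearLang {T : Type} (g h : ℕ) (L : Set (List T)) : Prop :=
  ∃ G : LinearGrammar T, G.IsRated g h ∧ G.GeneratesModEmpty L

/-- A `k`-linear grammar: a linear grammar together with the extra production
`S → S₁S₂⋯S_k` from a start symbol `S`, where none of the `Sᵢ` (the `heads`)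
occurs on the right-hand side of any other production and `S` occurs in no other
production at all (the latter is automatic here, since the start symbol is kept
as a fresh symbol outside the type `NT` of the remaining nonterminals). -/
structure KLinearGrammar (T : Type) (k : ℕ) where
  NT : Type
  heads : Fin k → NT
  rules : List (LinearRule T NT)
  heads_not_on_rhs : ∀ r ∈ rules, ∀ u w, ∀ B : NT, r.output = Sum.inr (u, B, w) →
    ∀ i : Fin k, B ≠ heads i

/-- The language generated by a `k`-linear grammar: as the start symbol occurs
only in the production `S → S₁S₂⋯S_k`, it consists of the concatenations
`p₁p₂⋯p_k` where each `pᵢ` is derived from `Sᵢ` by the linear productions. -/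
def KLinearGrammar.language {T : Type} {k : ℕ} (G : KLinearGrammar T k) : Set (List T) :=
  {p | ∃ ps : Fin k → List T, p = (List.ofFn ps).flatten ∧
    ∀ i : Fin k, LinDerives G.rules (G.heads i) (ps i)}

/-- A language is `k`-linear if some `k`-linear grammar generates it, up to the
empty word. -/
def IsKLinearLang {T : Type} (k : ℕ) (L : Set (List T)) : Prop :=
  ∃ G : KLinearGrammar T k, ∀ p : List T, p ≠ [] → (p ∈ L ↔ p ∈ G.language)

/-- A language is metalinear if it is `k`-linear for some positive integer `k`. -/
def IsMetalinearLang {T : Type} (L : Set (List T)) : Prop :=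
  ∃ k : ℕ, 0 < k ∧ IsKLinearLang k L

/-- The language `a L b`. -/
def sandwich {T : Type} (a : List T) (L : Set (List T)) (b : List T) : Set (List T) :=
  {p | ∃ q ∈ L, p = a ++ q ++ b}

/-- `p = v p' w` with `|v| = h`, `|w| = g` and `p'` in a language `L'` of the family `F`
such that `v L' w ⊆ L`. -/
def Peels {T : Type} (g h : ℕ) (F : Set (Set (List T))) (L : Set (List T)) (p : List T) : Prop :=
  ∃ v w p' : List T, ∃ L' ∈ F, v.length = h ∧ w.length = g ∧ p' ∈ L' ∧ p = v ++ p' ++ w ∧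
    ∀ q ∈ L', v ++ q ++ w ∈ L

theorem Peels.mono {T : Type} {g h : ℕ} {F F' : Set (Set (List T))} {L M : Set (List T)}
    {p : List T} (hp : Peels g h F L p) (hF : F ⊆ F') (hLM : L ⊆ M) : Peels g h F' M p := by
  obtain ⟨v, w, p', L', hL', hv, hw, hp', e, hs⟩ := hp
  exact ⟨v, w, p', L', hF hL', hv, hw, hp', e, fun q hq => hLM (hs q hq)⟩

theorem finite_words {T : Type} {S : Set T} (hS : S.Finite) (n : ℕ) :
    {l : List T | l.length ≤ n ∧ ∀ x ∈ l, x ∈ S}.Finite := by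
  have : Finite S := hS
  refine ((List.finite_length_le S n).image (List.map Subtype.val)).subset ?_
  rintro l ⟨hl, hx⟩
  lift l to List S using hx
  exact ⟨l, by simpa using hl, rfl⟩

/-- Productions `L → u` and sound productions `L → v L' w` in normal form, over the family `F`
and the alphabet `S`. -/
def soundRules {T : Type} (g h : ℕ) (F : Set (Set (List T))) (S : Set T) :
    Set (LinearRule T (Set (List T))) :=
  {r | (∃ L ∈ F, ∃ u ∈ L, u.length < g + h ∧ (∀ x ∈ u, x ∈ S) ∧ r = ⟨L, Sum.inl u⟩) ∨
    ∃ L ∈ F, ∃ L' ∈ F, ∃ v w : List T, v.length = h ∧ w.length = g ∧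
      (∀ x ∈ v, x ∈ S) ∧ (∀ x ∈ w, x ∈ S) ∧ (∀ q ∈ L', v ++ q ++ w ∈ L) ∧
      r = ⟨L, Sum.inr (v, L', w)⟩}

theorem soundRules_finite {T : Type} (g h : ℕ) {F : Set (Set (List T))} {S : Set T}
    (hF : F.Finite) (hS : S.Finite) : (soundRules g h F S).Finite := by
  have hW := finite_words hS (g + h)
  refine (((hF.prod hW).image fun x => (⟨x.1, Sum.inl x.2⟩ : LinearRule T (Set (List T)))).union
    ((hF.prod (hW.prod (hF.prod hW))).image
      fun x => (⟨x.1, Sum.inr x.2⟩ : LinearRule T (Set (List T))))).subset ?_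
  rintro r (⟨L, hL, u, -, hu, hx, rfl⟩ | ⟨L, hL, L', hL', v, w, hv, hw, hxv, hxw, -, rfl⟩)
  · exact Or.inl ⟨(L, u), ⟨hL, hu.le, hx⟩, rfl⟩
  · exact Or.inr ⟨(L, v, L', w), ⟨hL, ⟨hv.le.trans (by omega), hxv⟩, hL', hw.le.trans (by omega), hxw⟩, rfl⟩

/-- A language in a finite family all of whose long words can be peeled is generated by a grammar
in normal form. -/
theorem exists_normal_of_peelable {T : Type} {g h : ℕ} (hh : h ≠ 0) {F : Set (Set (List T))}
    {S : Set T} (hF : F.Finite) (hS : S.Finite) (hFS : ∀ L ∈ F, ∀ p ∈ L, ∀ x ∈ p, x ∈ S)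
    (hpeel : ∀ L ∈ F, ∀ p ∈ L, g + h ≤ p.length → Peels g h F L p)
    {L₀ : Set (List T)} (hL₀ : L₀ ∈ F) :
    ∃ G : LinearGrammar T, G.language = L₀ ∧
      (∀ r ∈ G.rules, ∀ v w, ∀ B : G.NT, r.output = Sum.inr (v, B, w) →
        v.length = h ∧ w.length = g) ∧
      (∀ r ∈ G.rules, ∀ u : List T, r.output = Sum.inl u → u.length < g + h) := by
  have hfin := soundRules_finite g h hF hS
  have hmem : ∀ r, r ∈ hfin.toFinset.toList ↔ r ∈ soundRules g h F S := by simp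
  refine ⟨⟨Set (List T), L₀, hfin.toFinset.toList⟩, ?_, ?_, ?_⟩
  · have sound : ∀ L p, LinDerives hfin.toFinset.toList L p → p ∈ L := by
      intro L p hp
      induction hp with
      | terminal hr =>
        rcases (hmem _).1 hr with ⟨L, _, u, hu, _, _, e⟩ | ⟨L, _, L', _, v, w, _, _, _, _, _, e⟩
        · cases e; exact hu
        · cases e
      | step hr _ ih =>
        rcases (hmem _).1 hr with ⟨L, _, u, hu, _, _, e⟩ | ⟨L, _, L', _, v, w, _, _, _, _, hs, e⟩
        · cases e
        · cases e; exact hs _ ih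
    have complete : ∀ n : ℕ, ∀ p : List T, p.length = n → ∀ L ∈ F, p ∈ L →
        LinDerives hfin.toFinset.toList L p := by
      intro n
      induction n using Nat.strong_induction_on with
      | _ n ih =>
        intro p hn L hL hp
        by_cases hlen : p.length < g + h
        · exact .terminal ((hmem _).2 (Or.inl ⟨L, hL, p, hp, hlen, hFS L hL p hp, rfl⟩))
        · obtain ⟨v, w, p', L', hL', hv, hw, hp', rfl, hs⟩ := hpeel L hL p hp (by omega)
          have hx := hFS L hL _ hp
          refine .step ((hmem _).2 (Or.inr ⟨L, hL, L', hL', v, w, hv, hw, ?_, ?_, hs, rfl⟩))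
            (ih p'.length ?_ p' rfl L' hL' hp')
          · exact fun x hxv => hx x (by simp [hxv])
          · exact fun x hxw => hx x (by simp [hxw])
          · simp only [List.length_append] at hn; omega
    ext p
    exact ⟨sound L₀ p, complete _ p rfl L₀ hL₀⟩
  · intro r hr v w B e
    rcases (hmem _).1 hr with ⟨L, _, u, _, _, _, rfl⟩ | ⟨L, _, L', _, v', w', hv, hw, _, _, _, rfl⟩
    · cases e
    · cases e; exact ⟨hv, hw⟩
  · intro r hr u e
    rcases (hmem _).1 hr with ⟨L, _, u', _, hu, _, rfl⟩ | ⟨L, _, L', _, v', w', _, _, _, _, _, rfl⟩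
    · cases e; exact hu
    · cases e

/-- The pieces into which right-hand sides of rules decompose: singletons `{q}` for terminating
rules, languages `a L(B) b` of the right rate for the others.  Sublists are used instead of
factors because they already form finite sets closed under removing letters. -/
def pieces {T N : Type} (g h : ℕ) (rs : List (LinearRule T N)) : Set (Set (List T)) :=
  {L | ∃ r ∈ rs, (∃ u q : List T, r.output = Sum.inl u ∧ q.Sublist u ∧ L = {q}) ∨
    ∃ u w a b : List T, ∃ B : N, r.output = Sum.inr (u, B, w) ∧ a.Sublist u ∧ b.Sublist w ∧
      h * b.length = g * a.length ∧ L = sandwich a {p | LinDerives rs B p} b}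

theorem finite_sublists {T : Type} (u : List T) : {q : List T | q.Sublist u}.Finite := by
  refine (List.finite_toSet u.sublists).subset ?_
  intro q hq
  simpa using hq

theorem pieces_finite {T N : Type} (g h : ℕ) (rs : List (LinearRule T N)) :
    (pieces g h rs).Finite := by
  refine ((List.finite_toSet rs).biUnion (t := fun r => {L | (∃ u q : List T,
    r.output = Sum.inl u ∧ q.Sublist u ∧ L = {q}) ∨
    ∃ u w a b : List T, ∃ B : N, r.output = Sum.inr (u, B, w) ∧ a.Sublist u ∧ b.Sublist w ∧
      h * b.length = g * a.length ∧ L = sandwich a {p | LinDerives rs B p} b}) ?_).subset ?_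
  · rintro ⟨A, u | ⟨u, B, w⟩⟩ -
    · refine ((finite_sublists u).image fun q => ({q} : Set (List T))).subset ?_
      rintro L (⟨u', q, e, hq, rfl⟩ | ⟨u', w', a, b, B', e, _⟩)
      · cases e; exact ⟨q, hq, rfl⟩
      · cases e
    · refine (((finite_sublists u).prod (finite_sublists w)).image
        fun x => sandwich x.1 {p | LinDerives rs B p} x.2).subset ?_
      rintro L (⟨u', q, e, hq, rfl⟩ | ⟨u', w', a, b, B', e, ha, hb, -, rfl⟩)
      · cases e
      · cases e; exact ⟨(a, b), ⟨ha, hb⟩, rfl⟩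
  · rintro L ⟨r, hr, hL⟩
    exact Set.mem_biUnion (x := r) hr hL

/-- A pair of words of rate `g / h` with nonempty left part loses `h` letters on the left and `g`
on the right; by coprimality its lengths are multiples of `h` and `g` by the same factor. -/
theorem split_rated {T : Type} {g h : ℕ} (hgh : Nat.Coprime g h) (hh : h ≠ 0) {a b : List T}
    (hab : h * b.length = g * a.length) (ha : a ≠ []) :
    ∃ v a' b' w : List T, a = v ++ a' ∧ b = b' ++ w ∧ v.length = h ∧ w.length = g ∧
      h * b'.length = g * a'.length := by
  obtain ⟨m, hm⟩ : h ∣ a.length := hgh.symm.dvd_of_dvd_mul_left ⟨_, hab.symm⟩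
  have hb : b.length = g * m := by
    apply Nat.eq_of_mul_eq_mul_left (Nat.pos_of_ne_zero hh)
    rw [hab, hm]; ring
  have hapos : 0 < a.length := List.length_pos_iff.2 ha
  obtain _ | m := m
  · omega
  refine ⟨a.take h, a.drop h, b.take (b.length - g), b.drop (b.length - g), by simp, by simp,
    ?_, ?_, ?_⟩
  · rw [List.length_take, hm, Nat.mul_succ]; omega
  · rw [List.length_drop, hb, Nat.mul_succ]; omega
  · rw [List.length_take, List.length_drop, hm, hb, Nat.mul_succ, Nat.mul_succ]
    simp only [Nat.add_sub_cancel]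
    rw [min_eq_left (by omega)]
    ring

theorem peels_singleton {T N : Type} {g h : ℕ} {rs : List (LinearRule T N)} {A : N}
    {u q : List T} (hr : (⟨A, Sum.inl u⟩ : LinearRule T N) ∈ rs) (hq : q.Sublist u)
    (hlen : g + h ≤ q.length) : Peels g h (pieces g h rs) {q} q := by
  have e : q = q.take h ++ (q.drop h).take (q.length - h - g) ++
      (q.drop h).drop (q.length - h - g) := by
    rw [List.append_assoc, List.take_append_drop, List.take_append_drop]
  refine ⟨q.take h, (q.drop h).drop (q.length - h - g), (q.drop h).take (q.length - h - g),
    {(q.drop h).take (q.length - h - g)}, ⟨_, hr, Or.inl ⟨u, _, rfl, ?_, rfl⟩⟩, ?_, ?_, rfl, e, ?_⟩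
  · exact ((List.take_sublist _ _).trans (List.drop_sublist _ _)).trans hq
  · rw [List.length_take]; omega
  · simp only [List.length_drop]; omega
  · rintro _ rfl
    exact e.symm

theorem peels_sandwich {T N : Type} {g h : ℕ} (hgh : Nat.Coprime g h) (hh : h ≠ 0)
    {rs : List (LinearRule T N)} {A B : N} {u w a b p : List T}
    (hr : (⟨A, Sum.inr (u, B, w)⟩ : LinearRule T N) ∈ rs) (hau : a.Sublist u) (hbw : b.Sublist w)
    (hab : h * b.length = g * a.length) (ha : a ≠ []) (hp : LinDerives rs B p) :
    Peels g h (pieces g h rs) (sandwich a {p | LinDerives rs B p} b) (a ++ p ++ b) := by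
  obtain ⟨v, a', b', z, rfl, rfl, hv, hz, hab'⟩ := split_rated hgh hh hab ha
  refine ⟨v, z, a' ++ p ++ b', sandwich a' {p | LinDerives rs B p} b',
    ⟨_, hr, Or.inr ⟨u, w, a', b', B, rfl, ?_, ?_, hab', rfl⟩⟩, hv, hz, ⟨p, hp, rfl⟩, by simp, ?_⟩
  · exact (List.sublist_append_right _ _).trans hau
  · exact (List.sublist_append_left _ _).trans hbw
  · rintro _ ⟨q, hq, rfl⟩
    exact ⟨q, hq, by simp⟩

theorem eq_nil_of_rated {T : Type} {g h : ℕ} (hh : h ≠ 0) {b : List T}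
    (hb : h * b.length = g * ([] : List T).length) : b = [] := by
  simpa [hh] using hb

/-- Long words derived from a nonterminal can be peeled; leading unit rules of the derivation are
skipped. -/
theorem peels_derived {T N : Type} {g h : ℕ} (hgh : Nat.Coprime g h) (hh : h ≠ 0)
    {rs : List (LinearRule T N)}
    (hrs : ∀ r ∈ rs, ∀ u w, ∀ B : N, r.output = Sum.inr (u, B, w) → h * w.length = g * u.length)
    {A : N} {p : List T} (hp : LinDerives rs A p) (hlen : g + h ≤ p.length) :
    Peels g h (pieces g h rs) {p | LinDerives rs A p} p := by
  induction hp with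
  | terminal hr =>
    refine (peels_singleton hr (List.Sublist.refl _) hlen).mono subset_rfl ?_
    rintro _ rfl
    exact LinDerives.terminal hr
  | @step A B u w p hr hp ih =>
    have huw := hrs _ hr u w B rfl
    by_cases hu : u = []
    · subst hu
      obtain rfl := eq_nil_of_rated hh huw
      simp only [List.nil_append, List.append_nil] at hlen ⊢
      refine (ih hlen).mono subset_rfl fun q hq => ?_
      simpa using LinDerives.step hr hq
    · refine (peels_sandwich hgh hh hr (.refl _) (.refl _) huw hu hp).mono subset_rfl ?_
      rintro _ ⟨q, hq, rfl⟩
      exact LinDerives.step hr hq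

/-- The letters occurring in a right-hand side. -/
def ruleLetters {T N : Type} : List T ⊕ (List T × N × List T) → List T
  | Sum.inl u => u
  | Sum.inr (u, _, w) => u ++ w

/-- The letters occurring in the rules. -/
def letters {T N : Type} (rs : List (LinearRule T N)) : Set T :=
  {x | x ∈ rs.flatMap fun r => ruleLetters r.output}

theorem mem_letters {T N : Type} {rs : List (LinearRule T N)} {r : LinearRule T N} (hr : r ∈ rs)
    {x : T} (hx : x ∈ ruleLetters r.output) : x ∈ letters rs :=
  List.mem_flatMap.2 ⟨r, hr, hx⟩

theorem letters_of_derives {T N : Type} {rs : List (LinearRule T N)} {A : N} {p : List T}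
    (hp : LinDerives rs A p) : ∀ x ∈ p, x ∈ letters rs := by
  induction hp with
  | terminal hr => exact fun x hx => mem_letters hr hx
  | step hr _ ih =>
    intro x hx
    simp only [List.mem_append] at hx
    rcases hx with (hx | hx) | hx
    · exact mem_letters hr (by simp [ruleLetters, hx])
    · exact ih x hx
    · exact mem_letters hr (by simp [ruleLetters, hx])

/-- **Normal form for `k`-rated linear grammars** (Lemma 1).  Every
`(g/h)`-rated linear grammar (`g, h` coprime, `h ≠ 0`) has an equivalent one
(generating the same language up to the empty word) in which every production
`A → v B w` satisfies `|v| = h` and `|w| = g`, and every terminating production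
`A → u` satisfies `|u| < g + h`. -/
theorem rated_linear_normal_form {T : Type} (g h : ℕ) (hgh : Nat.Coprime g h) (hh : h ≠ 0)
    (G : LinearGrammar T) (hG : G.IsRated g h) :
    ∃ G' : LinearGrammar T, G'.IsRated g h ∧
      (∀ p : List T, p ≠ [] → (p ∈ G.language ↔ p ∈ G'.language)) ∧
      (∀ r ∈ G'.rules, ∀ v w, ∀ B : G'.NT, r.output = Sum.inr (v, B, w) →
        v.length = h ∧ w.length = g) ∧
      (∀ r ∈ G'.rules, ∀ u : List T, r.output = Sum.inl u → u.length < g + h) := by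
  have hFS : ∀ L ∈ insert G.language (pieces g h G.rules), ∀ p ∈ L, ∀ x ∈ p,
      x ∈ letters G.rules := by
    rintro L (rfl | ⟨⟨A, o⟩, hr, ⟨u, q, rfl, hq, rfl⟩ | ⟨u, w, a, b, B, rfl, ha, hb, -, rfl⟩⟩)
    · exact fun p hp => letters_of_derives hp
    · rintro _ rfl x hx
      exact mem_letters hr (hq.subset hx)
    · rintro _ ⟨q, hq, rfl⟩ x hx
      simp only [List.mem_append] at hx
      rcases hx with (hx | hx) | hx
      · exact mem_letters hr (List.mem_append_left _ (ha.subset hx))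
      · exact letters_of_derives hq x hx
      · exact mem_letters hr (List.mem_append_right _ (hb.subset hx))
  have hpeel : ∀ L ∈ insert G.language (pieces g h G.rules), ∀ p ∈ L, g + h ≤ p.length →
      Peels g h (insert G.language (pieces g h G.rules)) L p := by
    rintro L (rfl | ⟨⟨A, o⟩, hr, ⟨u, q, rfl, hq, rfl⟩ | ⟨u, w, a, b, B, rfl, ha, hb, hab, rfl⟩⟩)
    · exact fun p hp hlen => (peels_derived hgh hh hG hp hlen).mono (Set.subset_insert _ _) subset_rfl
    · rintro _ rfl hlen
      exact (peels_singleton hr hq hlen).mono (Set.subset_insert _ _) subset_rfl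
    · rintro _ ⟨q, hq, rfl⟩ hlen
      by_cases hne : a = []
      · subst hne
        obtain rfl := eq_nil_of_rated hh hab
        simp only [List.nil_append, List.append_nil] at hlen ⊢
        exact (peels_derived hgh hh hG hq hlen).mono (Set.subset_insert _ _)
          fun p hp => ⟨p, hp, by simp⟩
      · exact (peels_sandwich hgh hh hr ha hb hab hne hq).mono (Set.subset_insert _ _) subset_rfl
  obtain ⟨G', hL, hstep, hterm⟩ := exists_normal_of_peelable hh
    ((pieces_finite g h G.rules).insert _) (List.finite_toSet _) hFS hpeel (Set.mem_insert _ _)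
  refine ⟨G', ?_, fun p _ => by rw [hL], hstep, hterm⟩
  intro r hr u w B e
  obtain ⟨hu, hw⟩ := hstep r hr u w B e
  rw [hu, hw, mul_comm]
end

section
/- Let L be a context-free language that is not linear. Then there exist infinitely many words p ∈ L admitting a factorization p = r s t u v w x y z satisfying: (1) r s^i t u^i v w^j x y^j z ∈ L for all integers i, j ≥ 0; (2) s u is nonempty; (3) w y is nonempty. -/
/-! ### Powers of words -/

section Words

variable {T : Type}

lemma wordPow_succ' (s : List T) (i : ℕ) : wordPow s (i + 1) = wordPow s i ++ s := by
  induction i with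
  | zero => simp [wordPow]
  | succ n ih =>
    rw [wordPow, ih, ← List.append_assoc, ← ih]
    rfl

lemma wordPow_add (s : List T) (m n : ℕ) : wordPow s (m + n) = wordPow s m ++ wordPow s n := by
  induction m with
  | zero => simp [wordPow]
  | succ m ih => rw [Nat.succ_add, wordPow, ih, wordPow, List.append_assoc]

lemma wordPow_wordPow (s : List T) (n k : ℕ) : wordPow (wordPow s n) k = wordPow s (n * k) := by
  induction k with
  | zero => simp [wordPow]
  | succ k ih => rw [wordPow_succ', ih, Nat.mul_succ, wordPow_add]

lemma length_wordPow (s : List T) (n : ℕ) : (wordPow s n).length = n * s.length := by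
  induction n with
  | zero => simp [wordPow]
  | succ n ih => simp [wordPow, ih, Nat.succ_mul, Nat.add_comm]

/-- One doubly pumpable word yields infinitely many: pump the first pair of factors and regard
the resulting powers as the new factors. -/
lemma infinite_of_doublePump (L : Set (List T)) (r s t u v w x y z : List T)
    (h : ∀ i j : ℕ, r ++ wordPow s i ++ t ++ wordPow u i ++ v ++
        wordPow w j ++ x ++ wordPow y j ++ z ∈ L)
    (hsu : s ++ u ≠ []) (hwy : w ++ y ≠ []) :
    {p | p ∈ L ∧ ∃ r s t u v w x y z : List T,
      p = r ++ s ++ t ++ u ++ v ++ w ++ x ++ y ++ z ∧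
      (∀ i j : ℕ, r ++ wordPow s i ++ t ++ wordPow u i ++ v ++
        wordPow w j ++ x ++ wordPow y j ++ z ∈ L) ∧
      s ++ u ≠ [] ∧ w ++ y ≠ []}.Infinite := by
  have hpos : 0 < s.length + u.length := by
    have := List.length_pos_iff.mpr hsu
    simpa using this
  refine Set.infinite_of_injective_forall_mem
    (f := fun n : ℕ => r ++ wordPow s (n + 1) ++ t ++ wordPow u (n + 1) ++ v ++ w ++ x ++ y ++ z)
    ?_ ?_
  · intro m n hmn
    have h1 := congrArg List.length hmn
    simp only [List.length_append, length_wordPow] at h1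
    have h2 : (m + 1) * (s.length + u.length) = (n + 1) * (s.length + u.length) := by
      rw [Nat.mul_add, Nat.mul_add]
      omega
    have := Nat.eq_of_mul_eq_mul_right hpos h2
    omega
  · intro n
    refine ⟨by simpa [wordPow] using h (n + 1) 1,
      r, wordPow s (n + 1), t, wordPow u (n + 1), v, w, x, y, z, rfl, ?_, ?_, hwy⟩
    · intro i j
      rw [wordPow_wordPow, wordPow_wordPow]
      exact h _ j
    · intro h0
      apply hsu
      simp only [wordPow, List.append_eq_nil_iff] at h0 ⊢
      exact ⟨h0.1.1, h0.2.1⟩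

end Words

/-! ### Derivation forests and the weak pumping lemma -/

section Yields

variable {T N : Type}

/-- `Yields R α w`: the sentential form `α` derives the terminal word `w` using rules from `R`,
in the form of a derivation forest whose roots are the symbols of `α`. -/
inductive Yields (R : Finset (ContextFreeRule T N)) : List (Symbol T N) → List T → Prop
  | nil : Yields R [] []
  | term (a : T) {α : List (Symbol T N)} {w : List T} (h : Yields R α w) :
      Yields R (Symbol.terminal a :: α) (a :: w)
  | nonterm {r : ContextFreeRule T N} (hr : r ∈ R) {α : List (Symbol T N)} {u w : List T}
      (hu : Yields R r.output u) (h : Yields R α w) :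
      Yields R (Symbol.nonterminal r.input :: α) (u ++ w)

/-- The terminal words derived from the sentential form `α` with the rules `R`. -/
def langOf (R : Finset (ContextFreeRule T N)) (α : List (Symbol T N)) : Set (List T) :=
  {w | Yields R α w}

variable {R R' : Finset (ContextFreeRule T N)}

lemma Yields.mono (hR : R' ⊆ R) {α : List (Symbol T N)} {w : List T} (h : Yields R' α w) :
    Yields R α w := by
  induction h with
  | nil => exact .nil
  | term a _ ih => exact .term a ih
  | nonterm hr _ _ ih1 ih2 => exact .nonterm (hR hr) ih1 ih2

lemma Yields.append {α β : List (Symbol T N)} {u w : List T} (h : Yields R α u)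
    (h' : Yields R β w) : Yields R (α ++ β) (u ++ w) := by
  induction h with
  | nil => exact h'
  | term a _ ih => exact .term a ih
  | nonterm hr hu _ _ ih2 =>
    rw [List.append_assoc]
    exact .nonterm hr hu ih2

lemma Yields.split {α β : List (Symbol T N)} {w : List T} (h : Yields R (α ++ β) w) :
    ∃ u v, w = u ++ v ∧ Yields R α u ∧ Yields R β v := by
  induction α generalizing w with
  | nil => exact ⟨[], w, rfl, .nil, h⟩
  | cons X α ih =>
    cases h with
    | term a h =>
      obtain ⟨u, v, rfl, hu, hv⟩ := ih h
      exact ⟨a :: u, v, rfl, .term a hu, hv⟩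
    | nonterm hr h1 h2 =>
      obtain ⟨u, v, rfl, hu, hv⟩ := ih h2
      exact ⟨_, v, (List.append_assoc _ _ _).symm, .nonterm hr h1 hu, hv⟩

lemma Yields.of_rule {r : ContextFreeRule T N} (hr : r ∈ R) {w : List T}
    (h : Yields R r.output w) : Yields R [Symbol.nonterminal r.input] w := by
  simpa using Yields.nonterm hr h .nil

lemma Yields.exists_rule {A : N} {w : List T} (h : Yields R [Symbol.nonterminal A] w) :
    ∃ r ∈ R, r.input = A ∧ Yields R r.output w := by
  cases h with
  | nonterm hr hu h =>
    cases h
    exact ⟨_, hr, rfl, by simpa using hu⟩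

/-- `Ctx R α x B y` is the semantic counterpart of `α ⇒* x B y` (`x`, `y` terminal words): filling
the hole with any word of `B` gives a word of `α`. -/
def Ctx (R : Finset (ContextFreeRule T N)) (α : List (Symbol T N)) (x : List T) (B : N)
    (y : List T) : Prop :=
  ∀ w, Yields R [Symbol.nonterminal B] w → Yields R α (x ++ w ++ y)

lemma Ctx.of_rule {r : ContextFreeRule T N} (hr : r ∈ R) {x y : List T} {B : N}
    (h : Ctx R r.output x B y) : Ctx R [Symbol.nonterminal r.input] x B y :=
  fun w hw => .of_rule hr (h w hw)

lemma Ctx.of_split {α β : List (Symbol T N)} {B : N} {u w : List T} (hu : Yields R α u)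
    (hw : Yields R β w) : Ctx R (α ++ Symbol.nonterminal B :: β) u B w := fun p hp => by
  have := (hu.append hp).append hw
  simpa using this

lemma Ctx.trans {α : List (Symbol T N)} {B C : N} {x y x' y' : List T} (h : Ctx R α x B y)
    (h' : Ctx R [Symbol.nonterminal B] x' C y') : Ctx R α (x ++ x') C (y' ++ y) := fun p hp => by
  have := h _ (h' p hp)
  simpa using this

/-- The nonterminal `A` derives a family `r sⁱ t uⁱ v` with `s u` nonempty. -/
def Pumpable (R : Finset (ContextFreeRule T N)) (A : N) : Prop :=
  ∃ r s t u v : List T, s ++ u ≠ [] ∧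
    ∀ i : ℕ, Yields R [Symbol.nonterminal A] (r ++ wordPow s i ++ t ++ wordPow u i ++ v)

lemma pumpable_of_ctx {A : N} {s t u : List T} (h : Ctx R [Symbol.nonterminal A] s A u)
    (hsu : s ++ u ≠ []) (ht : Yields R [Symbol.nonterminal A] t) : Pumpable R A := by
  refine ⟨[], s, t, u, [], hsu, fun i => ?_⟩
  induction i with
  | zero => simpa [wordPow] using ht
  | succ i ih =>
    have := h _ ih
    rw [wordPow_succ' u]
    simpa [wordPow] using this

lemma Pumpable.of_ctx {A B : N} {x y : List T} (h : Ctx R [Symbol.nonterminal A] x B y)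
    (hB : Pumpable R B) : Pumpable R A := by
  obtain ⟨r, s, t, u, v, hsu, hp⟩ := hB
  refine ⟨x ++ r, s, t, u, v ++ y, hsu, fun i => ?_⟩
  have := h _ (hp i)
  simpa using this

/-- A sentential form with infinitely many words contains an infinite nonterminal. -/
lemma exists_infinite_nonterminal (α : List (Symbol T N)) (h : (langOf R α).Infinite) :
    ∃ α₁ B α₂, α = α₁ ++ Symbol.nonterminal B :: α₂ ∧
      (langOf R [Symbol.nonterminal B]).Infinite := by
  induction α with
  | nil =>
    refine absurd ((Set.finite_singleton ([] : List T)).subset ?_) h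
    intro w hw
    cases hw
    rfl
  | cons X α ih =>
    by_cases hα : (langOf R α).Infinite
    · obtain ⟨α₁, B, α₂, rfl, hB⟩ := ih hα
      exact ⟨X :: α₁, B, α₂, rfl, hB⟩
    · rw [Set.not_infinite] at hα
      by_cases hX : (langOf R [X]).Infinite
      · cases X with
        | nonterminal B => exact ⟨[], B, α, rfl, hX⟩
        | terminal a =>
          refine absurd ((Set.finite_singleton [a]).subset ?_) hX
          rintro w hw
          cases hw with
          | term _ h => cases h; rfl
      · rw [Set.not_infinite] at hX
        refine absurd ((hX.image2 (· ++ ·) hα).subset ?_) h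
        intro w hw
        obtain ⟨u, v, rfl, hu, hv⟩ := Yields.split (α := [X]) hw
        exact ⟨u, hu, v, hv, rfl⟩

open Classical in
/-- Cutting at a lowest occurrence of `A`: a derivation either uses no `A`-rule at all, or has an
occurrence of `A` below whose root no `A`-rule is used. -/
lemma Yields.cut (A : N) {α : List (Symbol T N)} {w : List T} (h : Yields R α w) :
    Yields (R.filter (·.input ≠ A)) α w ∨
      ∃ x y w', w = x ++ w' ++ y ∧ Ctx R α x A y ∧
        ∃ r ∈ R, r.input = A ∧ Yields (R.filter (·.input ≠ A)) r.output w' := by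
  induction h with
  | nil => exact .inl .nil
  | term a _ ih =>
    rcases ih with ih | ⟨x, y, w', rfl, hc, hr⟩
    · exact .inl (.term a ih)
    · exact .inr ⟨a :: x, y, w', rfl, fun p hp => .term a (hc p hp), hr⟩
  | @nonterm r hr α u w hu hw ih1 ih2 =>
    rcases ih1 with ih1 | ⟨x, y, w', rfl, hc, hr'⟩
    · by_cases hA : r.input = A
      · refine .inr ⟨[], w, u, rfl, ?_, r, hr, hA, ih1⟩
        rw [← hA]
        exact Ctx.of_split .nil hw
      · rcases ih2 with ih2 | ⟨x, y, w', rfl, hc, hr'⟩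
        · exact .inl (.nonterm (Finset.mem_filter.mpr ⟨hr, hA⟩) ih1 ih2)
        · refine .inr ⟨u ++ x, y, w', by simp, fun p hp => ?_, hr'⟩
          have := Yields.nonterm hr hu (hc p hp)
          simpa using this
    · refine .inr ⟨x, y ++ w, w', by simp, fun p hp => ?_, hr'⟩
      have := Yields.nonterm hr (hc p hp) hw
      simpa using this

/-- Weak pumping lemma for arbitrary context-free grammars. The smaller rule set `R` is the
induction variable, while pumping is allowed to use all rules of `R₀`. -/
lemma pumpable_of_infinite (R₀ R : Finset (ContextFreeRule T N)) (hR : R ⊆ R₀) (A : N)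
    (h : (langOf R [Symbol.nonterminal A]).Infinite) : Pumpable R₀ A := by
  classical
  induction R using Finset.strongInduction generalizing A with
  | H R ih =>
    obtain ⟨t, ht⟩ := h.nonempty
    by_contra hnp
    have hno : ∀ x y, Ctx R [Symbol.nonterminal A] x A y → x = [] ∧ y = [] := by
      intro x y hc
      by_contra hxy
      have hp : Pumpable R A := pumpable_of_ctx hc (by simpa using hxy) ht
      obtain ⟨r, s, t, u, v, hsu, hp⟩ := hp
      exact hnp ⟨r, s, t, u, v, hsu, fun i => (hp i).mono hR⟩
    set R' := R.filter (·.input ≠ A) with hR'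
    have hsub : langOf R [Symbol.nonterminal A] ⊆
        ⋃ r ∈ {r | r ∈ R ∧ r.input = A}, langOf R' r.output := by
      intro w hw
      have hex : ∃ r ∈ R, r.input = A ∧ Yields R' r.output w := by
        rcases Yields.cut A hw with hc | ⟨x, y, w', rfl, hc, hr⟩
        · obtain ⟨r, hr, hrA, -⟩ := hc.exists_rule
          exact absurd hrA (Finset.mem_filter.mp hr).2
        · obtain ⟨rfl, rfl⟩ := hno x y hc
          simpa using hr
      obtain ⟨r, hr, hrA, hy⟩ := hex
      exact Set.mem_biUnion (show r ∈ {r | r ∈ R ∧ r.input = A} from ⟨hr, hrA⟩) hy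
    have hex : ∃ r ∈ R, r.input = A ∧ (langOf R' r.output).Infinite := by
      by_contra! hcon
      refine h (Set.Finite.subset (Set.Finite.biUnion ?_ ?_) hsub)
      · exact R.finite_toSet.subset fun r hr => hr.1
      · intro r hr
        exact hcon r hr.1 hr.2
    obtain ⟨r, hr, rfl, hinf⟩ := hex
    have hss : R' ⊂ R := Finset.filter_ssubset.mpr ⟨r, hr, by simp⟩
    obtain ⟨α₁, B, α₂, hout, hB⟩ := exists_infinite_nonterminal _ hinf
    have hpB := ih R' hss (hss.subset.trans hR) B hB
    obtain ⟨w, hw⟩ := hinf.nonempty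
    have hw' : Yields R₀ (α₁ ++ ([Symbol.nonterminal B] ++ α₂)) w := by
      have := Yields.mono (hss.subset.trans hR) hw
      simpa [hout] using this
    obtain ⟨u, v, -, hu, hv⟩ := hw'.split
    obtain ⟨-, v, -, -, hv⟩ := hv.split
    refine hnp (hpB.of_ctx (x := u) (y := v) (Ctx.of_rule (hR hr) ?_))
    rw [hout]
    exact Ctx.of_split hu hv

end Yields

/-! ### The linear grammar -/

section Linear

variable {T N : Type}

/-- The linear productions obtained from the rules in `R` by replacing every symbol of the body,
with the exception of at most one nonterminal, by the words it derives. Only replacements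
of finitely many words are allowed, which keeps the set finite. -/
def linRules (R : Finset (ContextFreeRule T N)) : Set (LinearRule T N) :=
  {q | ∃ r ∈ R, (langOf R r.output).Finite ∧ ∃ u ∈ langOf R r.output, q = ⟨r.input, .inl u⟩} ∪
  {q | ∃ r ∈ R, ∃ α B β, r.output = α ++ Symbol.nonterminal B :: β ∧
    (langOf R α).Finite ∧ (langOf R β).Finite ∧
    ∃ u ∈ langOf R α, ∃ w ∈ langOf R β, q = ⟨r.input, .inr (u, B, w)⟩}

lemma linRules_finite (R : Finset (ContextFreeRule T N)) : (linRules R).Finite := by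
  refine Set.Finite.union ?_ ?_
  · have : ∀ r ∈ R, {q : LinearRule T N | (langOf R r.output).Finite ∧
        ∃ u ∈ langOf R r.output, q = ⟨r.input, .inl u⟩}.Finite := by
      intro r _
      by_cases hf : (langOf R r.output).Finite
      · refine (hf.image fun u => (⟨r.input, .inl u⟩ : LinearRule T N)).subset ?_
        rintro q ⟨-, u, hu, rfl⟩
        exact ⟨u, hu, rfl⟩
      · refine Set.finite_empty.subset ?_
        rintro q ⟨h, -⟩
        exact hf h
    refine (Set.Finite.biUnion R.finite_toSet this).subset ?_
    rintro q ⟨r, hr, h⟩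
    exact Set.mem_biUnion hr h
  · have : ∀ r ∈ R, ∀ α ∈ {α | α ∈ r.output.inits}, ∀ β ∈ {β | β ∈ r.output.tails},
        {q : LinearRule T N | ∃ B, Symbol.nonterminal B ∈ r.output ∧
          (langOf R α).Finite ∧ (langOf R β).Finite ∧
          ∃ u ∈ langOf R α, ∃ w ∈ langOf R β, q = ⟨r.input, .inr (u, B, w)⟩}.Finite := by
      intro r _ α _ β _
      by_cases hf : (langOf R α).Finite ∧ (langOf R β).Finite
      · have hB : {B : N | (Symbol.nonterminal B : Symbol T N) ∈ r.output}.Finite :=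
          (List.finite_toSet r.output).preimage
            (Function.Injective.injOn fun a b h => Symbol.nonterminal.inj h)
        refine ((hf.1.prod (hB.prod hf.2)).image
          fun p => (⟨r.input, .inr p⟩ : LinearRule T N)).subset ?_
        rintro q ⟨B, hB, -, -, u, hu, w, hw, rfl⟩
        exact ⟨(u, B, w), ⟨hu, hB, hw⟩, rfl⟩
      · refine Set.finite_empty.subset ?_
        rintro q ⟨B, hB, h1, h2, -⟩
        exact hf ⟨h1, h2⟩
    refine (Set.Finite.biUnion R.finite_toSet fun r hr =>
      Set.Finite.biUnion (List.finite_toSet r.output.inits) fun α hα =>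
      Set.Finite.biUnion (List.finite_toSet r.output.tails) fun β hβ =>
        this r hr α hα β hβ).subset ?_
    rintro q ⟨r, hr, α, B, β, hout, h⟩
    refine Set.mem_biUnion hr (Set.mem_biUnion (x := α) ?_ (Set.mem_biUnion (x := β) ?_ ?_))
    · exact (List.mem_inits _ _).mpr ⟨_, hout.symm⟩
    · exact (List.mem_tails _ _).mpr ⟨α ++ [Symbol.nonterminal B], by simp [hout]⟩
    · exact ⟨B, by simp [hout], h⟩

lemma yields_of_linDerives {R : Finset (ContextFreeRule T N)} {rs : List (LinearRule T N)}
    (hrs : ∀ q ∈ rs, q ∈ linRules R) {A : N} {p : List T} (h : LinDerives rs A p) :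
    Yields R [Symbol.nonterminal A] p := by
  induction h with
  | terminal hr =>
    rcases hrs _ hr with ⟨r, hr₀, -, u, hu, h⟩ | ⟨r, hr₀, α, B, β, -, -, -, u, hu, w, hw, h⟩
    · cases h
      exact .of_rule hr₀ hu
    · simp at h
  | step hr _ ih =>
    rcases hrs _ hr with ⟨r, hr₀, -, u, hu, h⟩ | ⟨r, hr₀, α, B, β, hout, -, -, u, hu, w, hw, h⟩
    · simp at h
    · cases h
      refine Ctx.of_rule hr₀ ?_ _ ih
      rw [hout]
      exact Ctx.of_split hu hw

/-- `S` derives a doubly pumpable family of words. -/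
def DoublePump (R : Finset (ContextFreeRule T N)) (S : N) : Prop :=
  ∃ r s t u v w x y z : List T,
    (∀ i j : ℕ, Yields R [Symbol.nonterminal S] (r ++ wordPow s i ++ t ++ wordPow u i ++ v ++
        wordPow w j ++ x ++ wordPow y j ++ z)) ∧ s ++ u ≠ [] ∧ w ++ y ≠ []

/-- Two infinite occurrences in the body of a rule for a reachable nonterminal can be pumped
independently. -/
lemma doublePump_of_two_infinite {R : Finset (ContextFreeRule T N)} {S : N} {x y p : List T}
    {r : ContextFreeRule T N} (hr : r ∈ R)
    (hS : Ctx R [Symbol.nonterminal S] x r.input y) {α β γ : List (Symbol T N)} {B C : N}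
    (hout : r.output = α ++ Symbol.nonterminal B :: (β ++ Symbol.nonterminal C :: γ))
    (hp : Yields R r.output p)
    (hB : (langOf R [Symbol.nonterminal B]).Infinite)
    (hC : (langOf R [Symbol.nonterminal C]).Infinite) : DoublePump R S := by
  obtain ⟨r₁, s₁, t₁, u₁, v₁, h₁, hp₁⟩ := pumpable_of_infinite R R subset_rfl B hB
  obtain ⟨r₂, s₂, t₂, u₂, v₂, h₂, hp₂⟩ := pumpable_of_infinite R R subset_rfl C hC
  have hp' : Yields R (α ++ ([Symbol.nonterminal B] ++ (β ++ ([Symbol.nonterminal C] ++ γ)))) p := by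
    simpa [hout] using hp
  obtain ⟨a, _, -, ha, h⟩ := hp'.split
  obtain ⟨_, _, -, -, h⟩ := h.split
  obtain ⟨b, _, -, hb, h⟩ := h.split
  obtain ⟨_, c, -, -, hc⟩ := h.split
  refine ⟨x ++ a ++ r₁, s₁, t₁, u₁, v₁ ++ b ++ r₂, s₂, t₂, u₂, v₂ ++ c ++ y, fun i j => ?_, h₁, h₂⟩
  have h := ha.append ((hp₁ i).append (hb.append ((hp₂ j).append hc)))
  have h' : α ++ ([Symbol.nonterminal B] ++ (β ++ ([Symbol.nonterminal C] ++ γ))) = r.output := by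
    simp [hout]
  rw [h'] at h
  have := hS _ (.of_rule hr h)
  simpa using this

/-- Completeness of the linear grammar, by induction on derivation forests: the statement about all
occurrences of nonterminals in `α` makes the hypothesis available for every subtree. -/
lemma linDerives_aux {R : Finset (ContextFreeRule T N)} {S : N} {rs : List (LinearRule T N)}
    (hrs : ∀ q ∈ linRules R, q ∈ rs) (hnd : ¬ DoublePump R S)
    {α : List (Symbol T N)} {p : List T} (h : Yields R α p) :
    ∀ α₁ B α₂, α = α₁ ++ Symbol.nonterminal B :: α₂ →
      ∃ p₁ q p₂, p = p₁ ++ q ++ p₂ ∧ Yields R α₁ p₁ ∧ Yields R α₂ p₂ ∧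
        ((∃ x y, Ctx R [Symbol.nonterminal S] x B y) → LinDerives rs B q) := by
  induction h with
  | nil =>
    intro α₁ B α₂ h
    simp at h
  | term a _ ih =>
    intro α₁ B α₂ h
    cases α₁ with
    | nil => simp at h
    | cons X α₁ =>
      simp only [List.cons_append, List.cons.injEq] at h
      obtain ⟨rfl, h⟩ := h
      obtain ⟨p₁, q, p₂, rfl, h1, h2, h3⟩ := ih _ _ _ h
      exact ⟨a :: p₁, q, p₂, rfl, .term a h1, h2, h3⟩
  | @nonterm r hr α u w hu hw ih1 ih2 =>
    intro α₁ B α₂ h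
    cases α₁ with
    | cons X α₁ =>
      simp only [List.cons_append, List.cons.injEq] at h
      obtain ⟨rfl, h⟩ := h
      obtain ⟨p₁, q, p₂, rfl, h1, h2, h3⟩ := ih2 _ _ _ h
      exact ⟨u ++ p₁, q, p₂, by simp, .nonterm hr hu h1, h2, h3⟩
    | nil =>
      simp only [List.nil_append, List.cons.injEq, Symbol.nonterminal.injEq] at h
      obtain ⟨rfl, rfl⟩ := h
      refine ⟨[], u, w, rfl, .nil, hw, ?_⟩
      rintro ⟨x, y, hS⟩
      by_cases hfin : (langOf R r.output).Finite
      · exact .terminal (hrs _ (.inl ⟨r, hr, hfin, u, hu, rfl⟩))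
      · obtain ⟨α₁, C, α₂, hout, hC⟩ := exists_infinite_nonterminal _ hfin
        have hf1 : (langOf R α₁).Finite := by
          by_contra hinf
          obtain ⟨β₁, D, β₂, rfl, hD⟩ := exists_infinite_nonterminal _ hinf
          exact hnd (doublePump_of_two_infinite hr hS (by simpa using hout) hu hD hC)
        have hf2 : (langOf R α₂).Finite := by
          by_contra hinf
          obtain ⟨β₁, D, β₂, rfl, hD⟩ := exists_infinite_nonterminal _ hinf
          exact hnd (doublePump_of_two_infinite hr hS hout hu hC hD)
        obtain ⟨p₁, q, p₂, rfl, h1, h2, h3⟩ := ih1 _ _ _ hout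
        refine .step (hrs _ (.inr ⟨r, hr, α₁, C, α₂, hout, hf1, hf2, p₁, h1, p₂, h2, rfl⟩))
          (h3 ⟨x ++ p₁, p₂ ++ y, hS.trans (Ctx.of_rule hr ?_)⟩)
        rw [hout]
        exact Ctx.of_split h1 h2

lemma isLinearLang_of_not_doublePump {R : Finset (ContextFreeRule T N)} {S : N}
    (hnd : ¬ DoublePump R S) : IsLinearLang (langOf R [Symbol.nonterminal S]) := by
  refine ⟨⟨N, S, (linRules_finite R).toFinset.toList⟩, fun p _ => ⟨fun hp => ?_, fun hp => ?_⟩⟩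
  · obtain ⟨p₁, q, p₂, rfl, h1, h2, h3⟩ :=
      linDerives_aux (rs := (linRules_finite R).toFinset.toList) (by simp) hnd hp [] S [] rfl
    cases h1
    cases h2
    have := h3 ⟨[], [], fun w hw => by simpa using hw⟩
    simpa [LinearGrammar.language] using this
  · exact yields_of_linDerives (by simp) hp

end Linear

/-! ### Comparison with rewriting derivations -/

section Bridge

variable {T : Type}

lemma derives_of_yields {g : ContextFreeGrammar T} {α : List (Symbol T g.NT)} {w : List T}
    (h : Yields g.rules α w) : g.Derives α (w.map Symbol.terminal) := by
  induction h with
  | nil => rfl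
  | term a _ ih => exact ih.append_left [Symbol.terminal a]
  | @nonterm r hr α u w _ _ ih1 ih2 =>
    have h1 : g.Produces (Symbol.nonterminal r.input :: α) (r.output ++ α) := ⟨r, hr, .head α⟩
    rw [List.map_append]
    exact h1.trans_derives ((ih1.append_right α).trans (ih2.append_left _))

lemma yields_map_terminal {N : Type} (R : Finset (ContextFreeRule T N)) (w : List T) :
    Yields R (w.map Symbol.terminal) w := by
  induction w with
  | nil => exact .nil
  | cons a w ih => exact .term a ih

lemma yields_of_derives {g : ContextFreeGrammar T} {α : List (Symbol T g.NT)} {w : List T}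
    (h : g.Derives α (w.map Symbol.terminal)) : Yields g.rules α w := by
  induction h using Relation.ReflTransGen.head_induction_on with
  | refl => exact yields_map_terminal _ w
  | head h1 _ ih =>
    obtain ⟨r, hr, hrw⟩ := h1
    obtain ⟨p, q, rfl, rfl⟩ := hrw.exists_parts
    obtain ⟨_, c, rfl, h, hc⟩ := ih.split
    obtain ⟨a, b, rfl, ha, hb⟩ := h.split
    exact (ha.append (.of_rule hr hb)).append hc

lemma language_eq_langOf (g : ContextFreeGrammar T) :
    (g.language : Set (List T)) = langOf g.rules [Symbol.nonterminal g.initial] :=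
  Set.ext fun _ => ⟨yields_of_derives, derives_of_yields⟩

end Bridge

/-- **Pumping lemma for non-linear context-free languages** (Lemma 4).  If `L`
is context-free but not linear, then there are infinitely many words `p ∈ L`
admitting a factorization `p = r s t u v w x y z` with
`r sⁱ t uⁱ v wʲ x yʲ z ∈ L` for all `i, j ≥ 0`, `s u` nonempty and
`w y` nonempty. -/
theorem pumping_nonlinear_cf {T : Type} (L : Language T)
    (hcf : L.IsContextFree) (hnl : ¬ IsLinearLang L) :
    {p | p ∈ L ∧ ∃ r s t u v w x y z : List T,
      p = r ++ s ++ t ++ u ++ v ++ w ++ x ++ y ++ z ∧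
      (∀ i j : ℕ, r ++ wordPow s i ++ t ++ wordPow u i ++ v ++
        wordPow w j ++ x ++ wordPow y j ++ z ∈ L) ∧
      s ++ u ≠ [] ∧ w ++ y ≠ []}.Infinite := by
  obtain ⟨g, rfl⟩ := hcf
  have hL := language_eq_langOf g
  have hd : DoublePump g.rules g.initial := by
    by_contra hnd
    apply hnl
    have := isLinearLang_of_not_doublePump hnd
    rwa [← hL] at this
  obtain ⟨r, s, t, u, v, w, x, y, z, h, hsu, hwy⟩ := hd
  refine infinite_of_doublePump g.language r s t u v w x y z (fun i j => ?_) hsu hwy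
  rw [hL]
  exact h i j
end

section
/- Let L be a linear language. Then there exists an integer n such that every word p ∈ L with |p| ≥ n admits a factorization p = u v w x y satisfying: (1) u v^i w x^i y ∈ L for all i ∈ ℕ; (2) v x is nonempty; (3) |u v x y| ≤ n. -/
/-- Every terminal word `q` derivable from `B` gives a word `l q r` derivable from `A`.  This is
the consequence of `A ⇒* l B r` that pumping uses; it stands in for derivations of sentential
forms. -/
def LinContext {T N : Type} (rs : List (LinearRule T N)) (A : N) (l : List T) (B : N)
    (r : List T) : Prop :=
  ∀ q, LinDerives rs B q → LinDerives rs A (l ++ q ++ r)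

lemma LinContext.refl {T N : Type} (rs : List (LinearRule T N)) (A : N) :
    LinContext rs A [] A [] := by
  intro q hq
  simpa using hq

lemma LinContext.trans {T N : Type} {rs : List (LinearRule T N)} {A B C : N}
    {l₁ l₂ r₁ r₂ : List T} (h₁ : LinContext rs A l₁ B r₁) (h₂ : LinContext rs B l₂ C r₂) :
    LinContext rs A (l₁ ++ l₂) C (r₂ ++ r₁) := by
  intro q hq
  simpa [List.append_assoc] using h₁ _ (h₂ q hq)

lemma wordPow_append_self {T : Type} (v : List T) (i : ℕ) :
    wordPow v i ++ v = v ++ wordPow v i := by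
  induction i with
  | zero => simp [wordPow]
  | succ i ih => simp [wordPow, ih]

lemma LinContext.pow {T N : Type} {rs : List (LinearRule T N)} {C : N} {v x : List T}
    (h : LinContext rs C v C x) (i : ℕ) :
    LinContext rs C (wordPow v i) C (wordPow x i) := by
  induction i with
  | zero => exact LinContext.refl rs C
  | succ i ih =>
    have hloop := h.trans ih
    rwa [wordPow_append_self] at hloop

/-- The number of terminal letters on the right-hand side of a production. -/
def LinearRule.weight {T N : Type} (r : LinearRule T N) : ℕ :=
  match r.output with
  | Sum.inl u => u.length
  | Sum.inr (u, _, w) => u.length + w.length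

/-- Induction step of the pumping argument.  The path from `S` has reached `A` in the context
`l _ r`, and each nonterminal in `V` was passed on the way, with at least one letter produced
since.  If `A` derives `p`, then `l p r` is either short or contains a loop within bounded
distance from its ends. -/
lemma LinDerives.short_or_pumps {T N : Type} {rs : List (LinearRule T N)} {M : ℕ}
    (hM : ∀ r ∈ rs, r.weight ≤ M) (I : Finset N) (hI : ∀ r ∈ rs, r.input ∈ I) (S : N)
    {A : N} {p : List T} (hp : LinDerives rs A p) :
    ∀ (l r : List T) (V : Finset N), V ⊆ I → LinContext rs S l A r →
      l.length + r.length ≤ M * V.card →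
      (∀ C ∈ V, ∃ l₁ l₂ r₁ r₂, l = l₁ ++ l₂ ∧ r = r₂ ++ r₁ ∧ LinContext rs S l₁ C r₁ ∧
        LinContext rs C l₂ A r₂ ∧ l₂ ++ r₂ ≠ []) →
      (l ++ p ++ r).length ≤ M * I.card + M ∨
      ∃ u v w x y : List T, l ++ p ++ r = u ++ v ++ w ++ x ++ y ∧
        (∀ i : ℕ, LinDerives rs S (u ++ wordPow v i ++ w ++ wordPow x i ++ y)) ∧
        v ++ x ≠ [] ∧ u.length + v.length + x.length + y.length ≤ M * I.card := by
  induction hp with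
  | @terminal A u hr =>
    intro l r V hV _ hlen _
    left
    have h₁ : u.length ≤ M := hM _ hr
    have h₂ : M * V.card ≤ M * I.card := Nat.mul_le_mul_left M (Finset.card_le_card hV)
    simp only [List.length_append]
    omega
  | @step A B u w p hr hp ih =>
    intro l r V hV hS hlen hvis
    have hweight : u.length + w.length ≤ M := hM _ hr
    have hstep : LinContext rs A u B w := fun q hq => LinDerives.step hr hq
    have hword : l ++ (u ++ p ++ w) ++ r = (l ++ u) ++ p ++ (w ++ r) := by
      simp [List.append_assoc]
    by_cases huw : u ++ w = []
    · -- A unit production: neither the context nor the set of visited nonterminals changes.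
      obtain ⟨rfl, rfl⟩ := List.append_eq_nil_iff.mp huw
      have hcast : ∀ {D : N} {a b : List T}, LinContext rs D a A b → LinContext rs D a B b := by
        intro D a b h
        simpa using h.trans hstep
      have h := ih l r V hV (hcast hS) hlen (by
        intro C hC
        obtain ⟨l₁, l₂, r₁, r₂, h₁, h₂, h₃, h₄, h₅⟩ := hvis C hC
        exact ⟨l₁, l₂, r₁, r₂, h₁, h₂, h₃, hcast h₄, h₅⟩)
      simpa using h
    by_cases hA : A ∈ V
    · right
      obtain ⟨l₁, l₂, r₁, r₂, rfl, rfl, h₃, h₄, h₅⟩ := hvis A hA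
      refine ⟨l₁, l₂, u ++ p ++ w, r₂, r₁, by simp [List.append_assoc], fun i => ?_, h₅, ?_⟩
      · simpa [List.append_assoc] using h₃ _ (h₄.pow i _ (hstep p hp))
      · have h₂ : M * V.card ≤ M * I.card := Nat.mul_le_mul_left M (Finset.card_le_card hV)
        simp only [List.length_append] at hlen
        omega
    · classical
      rw [hword]
      refine ih (l ++ u) (w ++ r) (insert A V) ?_ (hS.trans hstep) ?_ ?_
      · exact Finset.insert_subset (hI _ hr) hV
      · rw [Finset.card_insert_of_notMem hA, Nat.mul_succ]
        simp only [List.length_append]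
        omega
      · intro C hC
        rcases Finset.mem_insert.mp hC with rfl | hC
        · exact ⟨l, u, r, w, rfl, rfl, hS, hstep, huw⟩
        · obtain ⟨l₁, l₂, r₁, r₂, rfl, rfl, h₃, h₄, h₅⟩ := hvis C hC
          refine ⟨l₁, l₂ ++ u, r₁, w ++ r₂, by simp, by simp, h₃, h₄.trans hstep, ?_⟩
          intro h
          simp only [List.append_eq_nil_iff] at h
          exact h₅ (by simp [h.1.1, h.2.2])

/-- **Pumping lemma for linear languages** (Lemma 3).  If `L` is linear, then
there is `n` such that every `p ∈ L` with `|p| ≥ n` factors as `p = u v w x y`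
with `u vⁱ w xⁱ y ∈ L` for all `i`, `v x` nonempty, and `|u v x y| ≤ n`. -/
theorem linear_pumping {T : Type} (L : Set (List T)) (hL : IsLinearLang L) :
    ∃ n : ℕ, ∀ p ∈ L, n ≤ p.length →
      ∃ u v w x y : List T, p = u ++ v ++ w ++ x ++ y ∧
        (∀ i : ℕ, u ++ wordPow v i ++ w ++ wordPow x i ++ y ∈ L) ∧
        v ++ x ≠ [] ∧
        u.length + v.length + x.length + y.length ≤ n := by
  classical
  obtain ⟨G, hG⟩ := hL
  let I : Finset G.NT := (G.rules.map LinearRule.input).toFinset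
  let M : ℕ := (G.rules.map LinearRule.weight).sum
  have hM : ∀ r ∈ G.rules, r.weight ≤ M := fun r hr =>
    List.le_sum_of_mem (List.mem_map_of_mem hr)
  have hI : ∀ r ∈ G.rules, r.input ∈ I := fun r hr =>
    List.mem_toFinset.mpr (List.mem_map_of_mem hr)
  refine ⟨M * I.card + M + 1, fun p hpL hlen => ?_⟩
  have hne : p ≠ [] := by
    rintro rfl
    simp at hlen
  have hp : LinDerives G.rules G.start p := (hG p hne).mp hpL
  rcases hp.short_or_pumps hM I hI G.start [] [] ∅ (Finset.empty_subset _)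
    (LinContext.refl _ _) (by simp) (by simp) with h | ⟨u, v, w, x, y, hfac, hpump, hvx, hb⟩
  · simp only [List.nil_append, List.append_nil] at h
    omega
  · simp only [List.nil_append, List.append_nil] at hfac
    -- The outer factors are shorter than `p`, so the middle factor is nonempty.
    have hw : w ≠ [] := by
      rintro rfl
      rw [hfac] at hlen
      simp only [List.length_append, List.length_nil] at hlen
      omega
    refine ⟨u, v, w, x, y, hfac, fun i => (hG _ ?_).mpr (hpump i), hvx, by omega⟩
    simp [hw]
end

section
/- The language L = { a^i b^i c^j d^j : i, j ∈ ℕ } over the four-letter alphabet {a, b, c, d} is not linear. -/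
/-- The language `{aⁱ bⁱ cʲ dʲ : i, j ∈ ℕ}` (Example 4).  Here the four-letter
alphabet `{a, b, c, d}` is `Fin 4` with `a = 0`, `b = 1`, `c = 2`, `d = 3`. -/
def abcdLang : Set (List (Fin 4)) :=
  {p | ∃ i j : ℕ, p = List.replicate i 0 ++ List.replicate i 1 ++
    List.replicate j 2 ++ List.replicate j 3}

/-- A derivation of a long word can be stopped at a sentential form `x B y` with
`k ≤ |x| + |y| ≤ k + M`, where `M` bounds the number of terminals in every rule. The statement
"`A` derives `x B y`" is expressed by the possibility of replacing the subword derived from `B`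
by any other word derived from `B`. -/
lemma exists_context {T N : Type} (rs : List (LinearRule T N)) (M : ℕ)
    (hterm : ∀ A u, (⟨A, Sum.inl u⟩ : LinearRule T N) ∈ rs → u.length ≤ M)
    (hstep : ∀ A u B w, (⟨A, Sum.inr (u, B, w)⟩ : LinearRule T N) ∈ rs →
      u.length + w.length ≤ M)
    {A : N} {p : List T} (h : LinDerives rs A p) :
    ∀ k, k + M < p.length → ∃ (B : N) (x q y : List T), p = x ++ q ++ y ∧
      k ≤ x.length + y.length ∧ x.length + y.length ≤ k + M ∧
      B ∈ rs.map LinearRule.input ∧ LinDerives rs B q ∧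
      ∀ r, LinDerives rs B r → LinDerives rs A (x ++ r ++ y) := by
  have hin : ∀ {B : N} {q : List T}, LinDerives rs B q → B ∈ rs.map LinearRule.input := by
    intro B q hB
    cases hB with
    | terminal hr => exact List.mem_map.2 ⟨_, hr, rfl⟩
    | step hr _ => exact List.mem_map.2 ⟨_, hr, rfl⟩
  induction h with
  | terminal hr =>
    intro k hk
    have := hterm _ _ hr
    omega
  | @step A B u w p hr hp ih =>
    intro k hk
    have hM := hstep _ _ _ _ hr
    simp only [List.length_append] at hk
    by_cases hl : k ≤ u.length + w.length
    · exact ⟨B, u, p, w, rfl, hl, by omega, hin hp, hp, fun r h => .step hr h⟩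
    · obtain ⟨C, x, q, y, rfl, h1, h2, h3, h4, h5⟩ :=
        ih (k - (u.length + w.length)) (by omega)
      refine ⟨C, u ++ x, q, y ++ w, by simp, ?_, ?_, h3, h4, ?_⟩
      · simp only [List.length_append]; omega
      · simp only [List.length_append]; omega
      · intro r hC
        have := LinDerives.step hr (h5 r hC)
        simpa using this

/-- A bound on the number of terminals occurring in a rule of a finite list. -/
lemma exists_rule_bound {T N : Type} (rs : List (LinearRule T N)) :
    ∃ M : ℕ, (∀ A u, (⟨A, Sum.inl u⟩ : LinearRule T N) ∈ rs → u.length ≤ M) ∧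
      (∀ A u B w, (⟨A, Sum.inr (u, B, w)⟩ : LinearRule T N) ∈ rs →
        u.length + w.length ≤ M) := by
  let f : LinearRule T N → ℕ := fun r =>
    Sum.elim List.length (fun t => t.1.length + t.2.2.length) r.output
  refine ⟨(rs.map f).sum, fun A u h => ?_, fun A u B w h => ?_⟩
  · exact List.single_le_sum (by simp) _ (List.mem_map_of_mem (f := f) h)
  · exact List.single_le_sum (by simp) _ (List.mem_map_of_mem (f := f) h)

/-- The word `aⁿ bⁿ cⁿ dⁿ`. -/
def diagWord (n : ℕ) : List (Fin 4) :=
  List.replicate n 0 ++ List.replicate n 1 ++ List.replicate n 2 ++ List.replicate n 3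

lemma diagWord_prefix {n : ℕ} {x z : List (Fin 4)} (h : diagWord n = x ++ z)
    (hx : x.length ≤ n) : x = List.replicate x.length 0 := by
  have h1 : x <+: diagWord n := ⟨z, h.symm⟩
  have h2 : List.replicate n 0 <+: diagWord n := by simp [diagWord]
  have h3 := List.prefix_of_prefix_length_le h1 h2 (by simpa using hx)
  exact List.eq_replicate_of_mem fun b hb => List.eq_of_mem_replicate (h3.subset hb)

lemma diagWord_suffix {n : ℕ} {y z : List (Fin 4)} (h : diagWord n = z ++ y)
    (hy : y.length ≤ n) : y = List.replicate y.length 3 := by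
  have h1 : y <:+ diagWord n := ⟨z, h.symm⟩
  have h2 : List.replicate n 3 <:+ diagWord n := List.suffix_append _ _
  have h3 := List.suffix_of_suffix_length_le h1 h2 (by simpa using hy)
  exact List.eq_replicate_of_mem fun b hb => List.eq_of_mem_replicate (h3.subset hb)

lemma abcdLang_count {p : List (Fin 4)} (h : p ∈ abcdLang) :
    p.count 0 = p.count 1 ∧ p.count 2 = p.count 3 := by
  obtain ⟨i, j, rfl⟩ := h
  simp [List.count_replicate]

/-- Replacing the short outer context `x', y'` of `aⁿ bⁿ cⁿ dⁿ` by another short one `x, y`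
leaves the language unless the lengths agree on both sides. -/
lemma length_eq_of_swap {n : ℕ} {x y q x' y' q' : List (Fin 4)}
    (h : diagWord n = x ++ q ++ y) (h' : diagWord n = x' ++ q' ++ y')
    (hx : x.length ≤ n) (hy : y.length ≤ n) (hx' : x'.length ≤ n) (hy' : y'.length ≤ n)
    (hmem : x ++ q' ++ y ∈ abcdLang) : x.length = x'.length ∧ y.length = y'.length := by
  have ex := diagWord_prefix (h.trans (List.append_assoc ..)) hx
  have ey := diagWord_suffix h hy
  have ex' := diagWord_prefix (h'.trans (List.append_assoc ..)) hx'
  have ey' := diagWord_suffix h' hy'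
  obtain ⟨c1, c2⟩ := abcdLang_count hmem
  have key : ∀ a, (diagWord n).count a = (x' ++ q' ++ y').count a := fun a => by rw [h']
  have k0 := key 0
  have k1 := key 1
  have k2 := key 2
  have k3 := key 3
  rw [ex, ey] at c1 c2
  rw [ex', ey'] at k0 k1 k2 k3
  simp [diagWord, List.count_replicate] at k0 k1 k2 k3 c1 c2
  omega

/-- The language `{aⁱ bⁱ cʲ dʲ : i, j ∈ ℕ}` is not linear (Example 4). -/
theorem abcdLang_not_linear : ¬ IsLinearLang abcdLang := by
  classical
  rintro ⟨G, hG⟩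
  obtain ⟨M, hterm, hstep⟩ := exists_rule_bound G.rules
  set K := G.rules.length with hK
  -- `n` exceeds the upper end of each of the windows `[i (M + 1), i (M + 1) + M]`, `i ≤ K`.
  set n := (K + 1) * (M + 1) with hn
  have hwin : ∀ i ≤ K, i * (M + 1) + M < n := by
    intro i hi
    have := Nat.mul_le_mul_right (M + 1) (Nat.succ_le_succ hi)
    rw [Nat.succ_mul] at this
    simp only [Nat.succ_eq_add_one] at this
    omega
  have hpos : 0 < n := by positivity
  have hlen : (diagWord n).length = n + n + n + n := by simp [diagWord, add_assoc]
  have hder : LinDerives G.rules G.start (diagWord n) := by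
    refine (hG _ ?_).1 ⟨n, n, rfl⟩
    intro h0
    rw [h0, List.length_nil] at hlen
    omega
  have hctx : ∀ i : Fin (K + 1), _ := fun i =>
    exists_context G.rules M hterm hstep hder (i * (M + 1))
      (by have := hwin i (by omega); omega)
  choose B x q y hw hlo hhi hB hq hrep using hctx
  have hbound : ∀ i, (x i).length + (y i).length < n := fun i =>
    (hhi i).trans_lt (hwin i (by omega))
  obtain ⟨i, -, j, -, hij, hBij⟩ := Finset.exists_ne_map_eq_of_card_lt_of_maps_to
    (s := Finset.univ) (t := (G.rules.map LinearRule.input).toFinset) (f := B)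
    (by
      refine (List.toFinset_card_le _).trans_lt ?_
      simp [hK])
    (fun i _ => by simpa using hB i)
  have hgen := hrep i (q j) (hBij ▸ hq j)
  have hxj := hbound j
  have hxi := hbound i
  have hmem : x i ++ q j ++ y i ∈ abcdLang := by
    refine (hG _ ?_).2 hgen
    intro h0
    have hq0 : (q j).length = 0 := by simp_all
    have := congrArg List.length (hw j)
    simp only [hlen, List.length_append] at this
    omega
  obtain ⟨e1, e2⟩ := length_eq_of_swap (hw i) (hw j) (by omega) (by omega) (by omega)
    (by omega) hmem
  -- Equal lengths would place both contexts in the same window.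
  have l1 := hlo i
  have l2 := hhi i
  have l3 := hlo j
  have l4 := hhi j
  rcases lt_or_gt_of_ne (fun h => hij (Fin.ext h) : (i : ℕ) ≠ j) with hlt | hlt
  · have := Nat.mul_le_mul_right (M + 1) (Nat.succ_le_of_lt hlt)
    rw [Nat.succ_mul] at this
    omega
  · have := Nat.mul_le_mul_right (M + 1) (Nat.succ_le_of_lt hlt)
    rw [Nat.succ_mul] at this
    omega
end

section
/- Let H be an infinite subset of the set of positive perfect squares {1², 2², 3², …}, and let L_H = { a^k b^k a^l b^l : k, l ≥ 1, and (k ∈ H or l ∈ H) } ∪ { a^m b^m : m ≥ 1 } over the alphabet {a, b}. Then L_H is not context-free. -/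
/-- The language `L_H = {aᵏ bᵏ aˡ bˡ : k, l ≥ 1, k ∈ H or l ∈ H} ∪ {aᵐ bᵐ : m ≥ 1}`
(Example 5).  Here the alphabet `{a, b}` is `Fin 2` with `a = 0`, `b = 1`. -/
def LH (H : Set ℕ) : Set (List (Fin 2)) :=
  {p | (∃ k l : ℕ, 1 ≤ k ∧ 1 ≤ l ∧ (k ∈ H ∨ l ∈ H) ∧
          p = List.replicate k 0 ++ List.replicate k 1 ++
              List.replicate l 0 ++ List.replicate l 1) ∨
        (∃ m : ℕ, 1 ≤ m ∧ p = List.replicate m 0 ++ List.replicate m 1)}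

namespace LHProof

/-! ### Parse trees -/

section Pumping

variable {T : Type} {g : ContextFreeGrammar T}

/-- `Yield g h s w`: the word `w` is the yield of a forest of parse trees of `g` whose roots are the
symbols of `s`, where the nesting depth of rule applications is at most `h`. -/
inductive Yield (g : ContextFreeGrammar T) : ℕ → List (Symbol T g.NT) → List T → Prop
  | nil (h : ℕ) : Yield g h [] []
  | term {h : ℕ} {s : List (Symbol T g.NT)} {w : List T} (t : T) (hs : Yield g h s w) :
      Yield g h (Symbol.terminal t :: s) (t :: w)
  | nonterm {h : ℕ} {s : List (Symbol T g.NT)} {w₁ w₂ : List T}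
      (r : ContextFreeRule T g.NT) (hr : r ∈ g.rules)
      (ho : Yield g h r.output w₁) (hs : Yield g (h + 1) s w₂) :
      Yield g (h + 1) (Symbol.nonterminal r.input :: s) (w₁ ++ w₂)

lemma Yield.mono {h : ℕ} {s : List (Symbol T g.NT)} {w : List T} (hy : Yield g h s w) :
    ∀ {h' : ℕ}, h ≤ h' → Yield g h' s w := by
  induction hy with
  | nil h => intro h' _; exact .nil h'
  | term t _ ih => intro h' hh; exact .term t (ih hh)
  | nonterm r hr _ _ iho ihs =>
    intro h' hh
    obtain ⟨h'', rfl⟩ : ∃ k, h' = k + 1 := ⟨h' - 1, by omega⟩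
    exact .nonterm r hr (iho (by omega)) (ihs hh)

lemma Yield.of_append {h : ℕ} {s₁ s₂ : List (Symbol T g.NT)} {w : List T}
    (hy : Yield g h (s₁ ++ s₂) w) :
    ∃ w₁ w₂, w = w₁ ++ w₂ ∧ Yield g h s₁ w₁ ∧ Yield g h s₂ w₂ := by
  induction s₁ generalizing w with
  | nil => exact ⟨[], w, rfl, .nil h, hy⟩
  | cons x s ih =>
    cases hy with
    | term t hs =>
      obtain ⟨w₁, w₂, rfl, h₁, h₂⟩ := ih hs
      exact ⟨t :: w₁, w₂, rfl, .term t h₁, h₂⟩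
    | nonterm r hr ho hs =>
      obtain ⟨w₁, w₂, rfl, h₁, h₂⟩ := ih hs
      exact ⟨_ ++ w₁, w₂, by simp, .nonterm r hr ho h₁, h₂⟩

lemma Yield.of_rewrites {r : ContextFreeRule T g.NT} (hr : r ∈ g.rules)
    {s s' : List (Symbol T g.NT)} (hs : r.Rewrites s s') :
    ∀ {h : ℕ} {w : List T}, Yield g h s' w → ∃ h', Yield g h' s w := by
  induction hs with
  | head s =>
    intro h w hy
    obtain ⟨w₁, w₂, rfl, h₁, h₂⟩ := hy.of_append
    exact ⟨h + 1, .nonterm r hr h₁ (h₂.mono (by omega))⟩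
  | cons x _ ih =>
    intro h w hy
    cases hy with
    | term t hs =>
      obtain ⟨h', h₁⟩ := ih hs
      exact ⟨h', .term t h₁⟩
    | @nonterm h₀ _ _ _ r' hr' ho hs =>
      obtain ⟨h', h₁⟩ := ih hs
      exact ⟨max h₀ h' + 1,
        .nonterm r' hr' (ho.mono (by omega)) (h₁.mono (by omega))⟩

lemma exists_yield {s : List (Symbol T g.NT)} {w : List T}
    (hd : g.Derives s (w.map Symbol.terminal)) : ∃ h, Yield g h s w := by
  induction hd using Relation.ReflTransGen.head_induction_on with
  | refl =>
    refine ⟨0, ?_⟩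
    induction w with
    | nil => exact .nil 0
    | cons t w ih => exact .term t ih
  | head hp _ ih =>
    obtain ⟨r, hr, hrw⟩ := hp
    obtain ⟨h, hy⟩ := ih
    exact Yield.of_rewrites hr hrw hy

lemma derives_append {s₁ s₂ t₁ t₂ : List (Symbol T g.NT)}
    (h₁ : g.Derives s₁ t₁) (h₂ : g.Derives s₂ t₂) : g.Derives (s₁ ++ s₂) (t₁ ++ t₂) :=
  (h₁.append_right s₂).trans (h₂.append_left t₁)

lemma derives_rule {r : ContextFreeRule T g.NT} (hr : r ∈ g.rules) :
    g.Derives [Symbol.nonterminal r.input] r.output :=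
  .single ⟨r, hr, ContextFreeRule.Rewrites.input_output⟩

lemma Yield.derives {h : ℕ} {s : List (Symbol T g.NT)} {w : List T} (hy : Yield g h s w) :
    g.Derives s (w.map Symbol.terminal) := by
  induction hy with
  | nil => exact .refl _
  | term t _ ih => exact ih.append_left [Symbol.terminal t]
  | nonterm r hr _ _ iho ihs =>
    rw [List.map_append]
    exact derives_append ((derives_rule hr).trans iho) ihs

/-- Pigeonhole: if the yield of a forest exceeds `c` letters per root on average, some tree with a
nonterminal root has a yield longer than `c ≥ 1`. -/
lemma Yield.exists_long_child {h c : ℕ} (hc : 1 ≤ c) {s : List (Symbol T g.NT)} {w : List T}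
    (hy : Yield g h s w) (hw : s.length * c < w.length) :
    ∃ A s₁ s₂ p z q, s = s₁ ++ [Symbol.nonterminal A] ++ s₂ ∧ w = p ++ z ++ q ∧
      Yield g h s₁ p ∧ Yield g h [Symbol.nonterminal A] z ∧ Yield g h s₂ q ∧ c < z.length := by
  induction hy with
  | nil => simp at hw
  | term t _ ih =>
    simp only [List.length_cons, add_mul, one_mul] at hw
    obtain ⟨A, s₁, s₂, p, z, q, rfl, rfl, h₁, h₂, h₃, h₄⟩ := ih (by omega)
    exact ⟨A, .terminal t :: s₁, s₂, t :: p, z, q, by simp, by simp, .term t h₁, h₂, h₃, h₄⟩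
  | @nonterm h s w₁ w₂ r hr ho hs _ ih =>
    simp only [List.length_cons, List.length_append, add_mul, one_mul] at hw
    by_cases hlong : c < w₁.length
    · refine ⟨r.input, [], s, [], w₁, w₂, by simp, by simp, .nil _, ?_, hs, hlong⟩
      simpa using Yield.nonterm r hr ho (.nil _)
    · obtain ⟨A, s₁, s₂, p, z, q, rfl, rfl, h₁, h₂, h₃, h₄⟩ := ih (by omega)
      exact ⟨A, .nonterminal r.input :: s₁, s₂, w₁ ++ p, z, q, by simp, by simp,
        .nonterm r hr ho h₁, h₂, h₃, h₄⟩

/-! ### The pumping lemma relative to a finite congruence -/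

/-- The nonterminal `A` derives the terminal word `w`. -/
def Der (g : ContextFreeGrammar T) (A : g.NT) (w : List T) : Prop :=
  g.Derives [Symbol.nonterminal A] (w.map Symbol.terminal)

/-- `A ⇒* u B y` in the semantic sense: surrounding any word derived from `B` by `u` and `y`
gives a word derived from `A`. -/
def Ctx (g : ContextFreeGrammar T) (A B : g.NT) (u y : List T) : Prop :=
  ∀ t, Der g B t → Der g A (u ++ t ++ y)

lemma Ctx.comp {A B C : g.NT} {u y u' y' : List T} (h₁ : Ctx g A B u y) (h₂ : Ctx g B C u' y') :
    Ctx g A C (u ++ u') (y' ++ y) := by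
  intro t ht
  simpa using h₁ _ (h₂ t ht)

variable {C : Type}

/-- The word `w` derived from `A` has a decomposition `u v z x y` that can be pumped, with
`v x` nonempty and with pumping leaving the `φ`-value unchanged. -/
def Pumpable (g : ContextFreeGrammar T) (φ : List T → C) (A : g.NT) (w : List T) : Prop :=
  ∃ B u v z x y, w = u ++ (v ++ z ++ x) ++ y ∧ 0 < v.length + x.length ∧
    φ (v ++ z ++ x) = φ z ∧ Der g B z ∧ Ctx g B B v x ∧ Ctx g A B u y

/-- A derivation of `w` from `A` passes through a nonterminal `B` with yield `z` such that the pair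
`(B, φ z)` lies in `U`. -/
def Hits (g : ContextFreeGrammar T) (φ : List T → C) (U : Finset (g.NT × C))
    (A : g.NT) (w : List T) : Prop :=
  ∃ B u z y, w = u ++ z ++ y ∧ (B, φ z) ∈ U ∧ Der g B z ∧ Ctx g A B u y

/-- A long word derived from `A` is pumpable or hits `U`, by induction on the number `n` of pairs
outside `U`.  The set `U` plays the role of the pairs met at ancestors of the current node from
which the path has already split off a nonempty part of the word. -/
lemma pumpable_or_hits [DecidableEq (g.NT × C)] (φ : List T → C) (F : Finset (g.NT × C))
    (hF : ∀ r ∈ g.rules, ∀ c, (r.input, c) ∈ F)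
    (m : ℕ) (hm : ∀ r ∈ g.rules, r.output.length ≤ m) (n : ℕ) :
    ∀ U : Finset (g.NT × C), (F \ U).card ≤ n → ∀ (h : ℕ) (A : g.NT) (w : List T),
      Yield g h [Symbol.nonterminal A] w → (m + 1) ^ n < w.length →
      Pumpable g φ A w ∨ Hits g φ U A w := by
  induction n with
  | zero =>
    intro U hU h A w hy _
    have hd := hy.derives
    have hsub : F ⊆ U := by
      rw [← Finset.sdiff_eq_empty_iff_subset]
      exact Finset.card_eq_zero.mp (Nat.le_zero.mp hU)
    cases hy with
    | nonterm r hr ho hs =>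
      exact .inr ⟨r.input, [], _, [], by simp, hsub (hF r hr _), hd, fun t ht => by simpa using ht⟩
  | succ n ihn =>
    intro U hU h
    induction h with
    | zero => intro A w hy; cases hy
    | succ h ihh =>
      intro A w hy hw
      have hd := hy.derives
      by_cases hAU : (A, φ w) ∈ U
      · exact .inr ⟨A, [], w, [], by simp, hAU, hd, fun t ht => by simpa using ht⟩
      cases hy with
      | @nonterm _ _ w₁ w₂ r hr ho hs =>
        cases hs
        rw [List.append_nil] at *
        have hpos : 1 ≤ (m + 1) ^ n := Nat.one_le_pow _ _ (by omega)
        obtain ⟨B, s₁, s₂, p, z, q, hs, rfl, h₁, h₂, h₃, h₄⟩ :=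
          ho.exists_long_child hpos (lt_of_le_of_lt (by
            rw [pow_succ, mul_comm]
            exact Nat.mul_le_mul_left _ ((hm r hr).trans (by omega))) hw)
        have hctx : Ctx g r.input B p q := by
          intro t ht
          refine (derives_rule hr).trans ?_
          rw [hs, List.map_append, List.map_append]
          exact derives_append (derives_append h₁.derives ht) h₃.derives
        by_cases hpq : p.length + q.length = 0
        · -- The whole word lies below the child `B`, which has smaller depth.
          obtain rfl : p = [] := List.length_eq_zero_iff.mp (by omega)
          obtain rfl : q = [] := List.length_eq_zero_iff.mp (by omega)
          simp only [List.nil_append, List.append_nil] at *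
          rcases ihh B z h₂ hw with ⟨D, u, v, z', x, y, e, h5, h6, h7, h8, h9⟩ |
            ⟨D, u, z', y, e, h5, h6, h7⟩
          · exact .inl ⟨D, u, v, z', x, y, e, h5, h6, h7, h8, by simpa using hctx.comp h9⟩
          · exact .inr ⟨D, u, z', y, e, h5, h6, by simpa using hctx.comp h7⟩
        · have hcard : (F \ insert (r.input, φ (p ++ z ++ q)) U).card ≤ n := by
            have hlt : (F \ insert (r.input, φ (p ++ z ++ q)) U).card < (F \ U).card := by
              apply Finset.card_lt_card
              rw [Finset.ssubset_iff_of_subset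
                (Finset.sdiff_subset_sdiff le_rfl (Finset.subset_insert _ _))]
              exact ⟨_, Finset.mem_sdiff.mpr ⟨hF r hr _, hAU⟩, by simp⟩
            omega
          rcases ihn _ hcard h B z h₂ h₄ with ⟨D, u, v, z', x, y, rfl, h5, h6, h7, h8, h9⟩ |
            ⟨D, u, z', y, rfl, h5, h6, h7⟩
          · exact .inl ⟨D, p ++ u, v, z', x, y ++ q, by simp, h5, h6, h7, h8, hctx.comp h9⟩
          · rcases Finset.mem_insert.mp h5 with h5 | h5
            · -- The pair at the root reappears strictly below it: this is the loop to be pumped.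
              obtain ⟨rfl, hz⟩ := Prod.mk.inj h5
              refine .inl ⟨r.input, [], p ++ u, z', y ++ q, [], by simp, ?_, ?_, h6, hctx.comp h7,
                fun t ht => by simpa using ht⟩
              · simp only [List.length_append]; omega
              · rw [hz]; congr 1; simp
            · exact .inr ⟨D, p ++ u, z', y ++ q, by simp, h5, h6, hctx.comp h7⟩

/-- Let `φ` be a congruence of finite index.  Above some length, every word `w` of a context-free
language gives rise to words of the language, with the same `φ`-value as `w`, whose lengths form
an infinite arithmetic progression starting at the length of `w`. -/
theorem pumping [Finite C] (g : ContextFreeGrammar T) (φ : List T → C)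
    (hφ : ∀ u y z z', φ z = φ z' → φ (u ++ z ++ y) = φ (u ++ z' ++ y)) :
    ∃ N : ℕ, ∀ w ∈ g.language, N < w.length →
      ∃ d, 0 < d ∧ ∀ i : ℕ, ∃ w' ∈ g.language, φ w' = φ w ∧ w'.length = w.length + i * d := by
  classical
  have := Fintype.ofFinite C
  let F : Finset (g.NT × C) := g.rules.image ContextFreeRule.input ×ˢ Finset.univ
  let m : ℕ := g.rules.sup fun r => r.output.length
  refine ⟨(m + 1) ^ F.card, fun w hw hlen => ?_⟩
  obtain ⟨h, hy⟩ := exists_yield hw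
  rcases pumpable_or_hits φ F
    (fun r hr c => Finset.mem_product.mpr ⟨Finset.mem_image_of_mem _ hr, Finset.mem_univ _⟩)
    m (fun r hr => Finset.le_sup (f := fun r : ContextFreeRule T g.NT => r.output.length) hr)
    F.card ∅ (by simp) h _ w hy hlen with
    ⟨B, u, v, z, x, y, rfl, hpos, hvx, hz, hB, hA⟩ | ⟨_, _, _, _, _, h5, _⟩
  · refine ⟨v.length + x.length, hpos, fun i => ?_⟩
    have key : ∀ i : ℕ, ∃ t, Der g B t ∧ φ t = φ z ∧
        t.length = z.length + i * (v.length + x.length) := by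
      intro i
      induction i with
      | zero => exact ⟨z, hz, rfl, by simp⟩
      | succ i ih =>
        obtain ⟨t, ht, ht', htl⟩ := ih
        refine ⟨v ++ t ++ x, hB t ht, (hφ _ _ _ _ ht').trans hvx, ?_⟩
        simp only [List.length_append, htl, add_mul]
        omega
    obtain ⟨t, ht, ht', htl⟩ := key (i + 1)
    refine ⟨u ++ t ++ y, hA t ht, hφ _ _ _ _ (ht'.trans hvx.symm), ?_⟩
    simp only [List.length_append, htl, add_mul]
    omega
  · simp at h5

end Pumping

/-! ### The automaton for `a* b⁺ aabb` -/

/-- Transition function of a deterministic automaton for `a* b⁺ aabb`, with initial state `0`,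
accepting state `5` and sink `6`. -/
def step : Fin 7 → Fin 2 → Fin 7 :=
  ![![0, 1], ![2, 1], ![3, 6], ![6, 4], ![6, 5], ![6, 6], ![6, 6]]

/-- The transition map of a word, a congruence of finite index. -/
def trans (w : List (Fin 2)) : Fin 7 → Fin 7 := fun q => w.foldl step q

lemma trans_append (u v : List (Fin 2)) (q : Fin 7) : trans (u ++ v) q = trans v (trans u q) := by
  simp [trans]

lemma trans_loop {q : Fin 7} {x : Fin 2} (h : step q x = q) (n : ℕ) :
    trans (List.replicate n x) q = q := by
  induction n with
  | zero => rfl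
  | succ n ih => simpa [trans, List.replicate_succ, h] using ih

lemma trans_replicate_succ (q : Fin 7) (x : Fin 2) (n : ℕ) :
    trans (List.replicate (n + 1) x) q = trans (List.replicate n x) (step q x) := by
  simp [trans, List.replicate_succ]

/-- The automaton is in state `1` after reading a nonempty word `aᵏ bᵏ`. -/
lemma trans_block {k : ℕ} (hk : 1 ≤ k) :
    trans (List.replicate k 0 ++ List.replicate k 1) 0 = 1 := by
  obtain ⟨k, rfl⟩ : ∃ j, k = j + 1 := ⟨k - 1, by omega⟩
  rw [trans_append, trans_loop (q := 0) (x := 0) rfl, trans_replicate_succ]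
  exact trans_loop (q := 1) (x := 1) rfl k

lemma eq_two_of_accept {l : ℕ} (hl : 1 ≤ l)
    (h : trans (List.replicate l 0 ++ List.replicate l 1) 1 = 5) : l = 2 := by
  rw [trans_append] at h
  match l, hl with
  | 1, _ => exact absurd h (by decide)
  | 2, _ => rfl
  | l + 3, _ =>
    rw [trans_replicate_succ 1 0, trans_replicate_succ _ 0, trans_replicate_succ _ 0,
      show step (step (step 1 0) 0) 0 = 6 from rfl, trans_loop (q := 6) (x := 0) rfl,
      trans_loop (q := 6) (x := 1) rfl] at h
    exact absurd h (by decide)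

/-- The words of `L_H` accepted by the automaton have length `2 m² + 4`; this uses that `2` is not
a square. -/
lemma length_of_accept {H : Set ℕ} (hsq : H ⊆ {n | ∃ m : ℕ, 1 ≤ m ∧ n = m ^ 2})
    {w : List (Fin 2)} (hw : w ∈ LH H) (h : trans w 0 = 5) : ∃ m, w.length = 2 * m ^ 2 + 4 := by
  rcases hw with ⟨k, l, hk, hl, hH, rfl⟩ | ⟨m, hm, rfl⟩
  · rw [List.append_assoc _ (List.replicate l 0), trans_append, trans_block hk] at h
    obtain rfl := eq_two_of_accept hl h
    rcases hH with hH | hH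
    · obtain ⟨m, -, rfl⟩ := hsq hH
      refine ⟨m, ?_⟩
      simp only [List.length_append, List.length_replicate]
      omega
    · obtain ⟨m, -, hm⟩ := hsq hH
      rcases Nat.lt_or_ge m 2 with h2 | h2
      · interval_cases m <;> omega
      · nlinarith
  · rw [trans_block hm] at h
    exact absurd h (by decide)

/-- The numbers `2 m² + 4` contain no infinite arithmetic progression. -/
lemma no_progression {L d : ℕ} (hd : 0 < d) (h : ∀ i : ℕ, ∃ m, L + i * d = 2 * m ^ 2 + 4) :
    False := by
  -- From consecutive terms, `d ≥ 2 ((m + 1)² - m²) > m`, while `i` is chosen to make `m > d`.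
  obtain ⟨m, hm⟩ := h (2 * d ^ 2 + 5)
  obtain ⟨m', hm'⟩ := h (2 * d ^ 2 + 5 + 1)
  have hlt : m < m' := by
    by_contra hle
    have := Nat.pow_le_pow_left (not_lt.mp hle) 2
    nlinarith
  have hsucc : (m + 1) ^ 2 ≤ m' ^ 2 := Nat.pow_le_pow_left hlt 2
  have hmd : m ≤ d := by nlinarith
  have hsq : m ^ 2 ≤ d ^ 2 := Nat.pow_le_pow_left hmd 2
  nlinarith

end LHProof

open LHProof in
/-- If `H` is an infinite set of positive perfect squares, then `L_H` is not
context-free (Example 5). -/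
theorem LH_not_contextFree (H : Set ℕ) (hinf : H.Infinite)
    (hsq : H ⊆ {n | ∃ m : ℕ, 1 ≤ m ∧ n = m ^ 2}) :
    ¬ Language.IsContextFree (T := Fin 2) (LH H) := by
  rintro ⟨g, hg⟩
  have hmem : ∀ w, w ∈ g.language ↔ w ∈ LH H := fun w => by rw [hg]; rfl
  obtain ⟨N, hN⟩ := pumping g trans (fun u y z z' hz => by
    funext q
    simp only [trans_append, hz])
  obtain ⟨k, hkH, hk⟩ := hinf.exists_gt N
  have hk1 : 1 ≤ k := by omega
  -- The word `aᵏ bᵏ aabb`.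
  let w : List (Fin 2) := List.replicate k 0 ++ List.replicate k 1 ++
    List.replicate 2 0 ++ List.replicate 2 1
  have hw : w ∈ LH H := .inl ⟨k, 2, hk1, by omega, .inl hkH, rfl⟩
  have hacc : trans w 0 = 5 := by
    simp only [w]
    rw [List.append_assoc _ (List.replicate 2 0), trans_append, trans_block hk1]
    rfl
  have hlen : N < w.length := by
    simp only [w, List.length_append, List.length_replicate]
    omega
  obtain ⟨d, hd, hpump⟩ := hN w ((hmem w).mpr hw) hlen
  refine no_progression (L := w.length) hd fun i => ?_
  obtain ⟨w', hw', htr, hl⟩ := hpump i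
  rw [← hl]
  exact length_of_accept hsq ((hmem w').mp hw') (by rw [htr, hacc])
end

section
/- Let H be an infinite subset of the set of positive perfect squares {1², 2², 3², …}, and let L_H = { a^k b^k a^l b^l : k, l ≥ 1, and (k ∈ H or l ∈ H) } ∪ { a^m b^m : m ≥ 1 } over the alphabet {a, b}. Then L_H is not linear. -/
/-- The total number of terminals on the right-hand side of a linear production. -/
def LinearRule.size {T N : Type} (r : LinearRule T N) : ℕ :=
  match r.output with
  | Sum.inl u => u.length
  | Sum.inr (u, _, w) => u.length + w.length

theorem exists_size_bound {T N : Type} (rs : List (LinearRule T N)) :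
    ∃ C, ∀ r ∈ rs, r.size ≤ C := by
  induction rs with
  | nil => exact ⟨0, by simp⟩
  | cons r rs ih =>
    obtain ⟨C, hC⟩ := ih
    refine ⟨max r.size C, fun r' hr' => ?_⟩
    rcases List.mem_cons.1 hr' with rfl | h
    · exact le_max_left _ _
    · exact (hC r' h).trans (le_max_right _ _)

theorem LinDerives.mem_inputs {T N : Type} {rs : List (LinearRule T N)} {A : N} {p : List T}
    (h : LinDerives rs A p) : A ∈ rs.map LinearRule.input := by
  cases h with
  | terminal hr => exact List.mem_map.2 ⟨_, hr, rfl⟩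
  | step hr _ => exact List.mem_map.2 ⟨_, hr, rfl⟩

/-- A derivation of a long word can be cut at a sentential form `u B w` whose number of terminals
is any prescribed `t`, up to an error of at most the size `C` of the largest production. The
relation `A ⇒* u B w` is expressed by closure under replacing the word derived from `B`. -/
theorem LinDerives.exists_cut {T N : Type} {rs : List (LinearRule T N)} {C : ℕ}
    (hC : ∀ r ∈ rs, r.size ≤ C) {A : N} {p : List T} (h : LinDerives rs A p) :
    ∀ t, t + C < p.length → ∃ B u q w, p = u ++ q ++ w ∧ LinDerives rs B q ∧
      (∀ q', LinDerives rs B q' → LinDerives rs A (u ++ q' ++ w)) ∧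
      t ≤ u.length + w.length ∧ u.length + w.length ≤ t + C := by
  induction h with
  | terminal hr =>
    intro t ht
    have := hC _ hr
    simp only [LinearRule.size] at this
    omega
  | @step A B u w p hr hp ih =>
    intro t ht
    have hs := hC _ hr
    simp only [LinearRule.size] at hs
    by_cases htu : t ≤ u.length + w.length
    · exact ⟨B, u, p, w, rfl, hp, fun q' hq' => .step hr hq', htu, by omega⟩
    · obtain ⟨B', u', q, w', rfl, hq, hcl, h1, h2⟩ := ih (t - (u.length + w.length)) (by
        simp only [List.length_append] at ht ⊢
        omega)
      refine ⟨B', u ++ u', q, w' ++ w, by simp, hq, fun q' hq' => ?_, ?_, ?_⟩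
      · have := LinDerives.step hr (hcl q' hq')
        simpa using this
      · simp only [List.length_append]
        omega
      · simp only [List.length_append]
        omega

/-- The first block of a word, once properly terminated, is uniquely determined. -/
theorem replicate_append_cons_inj {T : Type} {a b : T} (hab : a ≠ b) :
    ∀ {m n : ℕ} {x y : List T},
      List.replicate m a ++ b :: x = List.replicate n a ++ b :: y → m = n ∧ x = y
  | 0, 0, _, _, h => by simpa using h
  | 0, n + 1, _, _, h => by
    simp only [List.replicate_succ, List.replicate_zero, List.nil_append, List.cons_append,
      List.cons.injEq] at h
    exact absurd h.1.symm hab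
  | m + 1, 0, _, _, h => by
    simp only [List.replicate_succ, List.replicate_zero, List.nil_append, List.cons_append,
      List.cons.injEq] at h
    exact absurd h.1 hab
  | m + 1, n + 1, _, _, h => by
    simp only [List.replicate_succ, List.cons_append, List.cons.injEq, true_and] at h
    obtain ⟨h1, h2⟩ := replicate_append_cons_inj hab h
    exact ⟨by rw [h1], h2⟩

theorem eq_of_mem_LH {H : Set ℕ} {p h s : ℕ} (hh : 1 ≤ h) (hs : 1 ≤ s)
    (hmem : List.replicate p 0 ++ List.replicate h 1 ++ List.replicate h 0 ++
      List.replicate s 1 ∈ LH H) : p = h ∧ s = h := by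
  have h01 : (0 : Fin 2) ≠ 1 := by decide
  obtain ⟨h, rfl⟩ : ∃ h', h = h' + 1 := ⟨h - 1, by omega⟩
  obtain ⟨s, rfl⟩ : ∃ s', s = s' + 1 := ⟨s - 1, by omega⟩
  rcases hmem with ⟨k, l, hk, hl, -, he⟩ | ⟨m, hm, he⟩
  · obtain ⟨k, rfl⟩ : ∃ k', k = k' + 1 := ⟨k - 1, by omega⟩
    obtain ⟨l, rfl⟩ : ∃ l', l = l' + 1 := ⟨l - 1, by omega⟩
    rw [List.replicate_succ (n := h) (a := 1), List.replicate_succ (n := k) (a := 1),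
      List.replicate_succ (n := s), List.replicate_succ (n := l) (a := 1)] at he
    simp only [List.append_assoc, List.cons_append] at he
    obtain ⟨e1, he⟩ := replicate_append_cons_inj h01 he
    rw [List.replicate_succ (n := h), List.replicate_succ (n := l)] at he
    simp only [List.cons_append] at he
    obtain ⟨e2, he⟩ := replicate_append_cons_inj h01.symm he
    obtain ⟨e3, he⟩ := replicate_append_cons_inj h01 he
    have e4 := congrArg List.length he
    simp only [List.length_replicate] at e4
    omega
  · -- The word has a letter `a` after its first `b`, unlike `aᵐbᵐ`.
    obtain ⟨m, rfl⟩ : ∃ m', m = m' + 1 := ⟨m - 1, by omega⟩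
    rw [List.replicate_succ (n := h) (a := 1), List.replicate_succ (n := m) (a := 1)] at he
    simp only [List.append_assoc, List.cons_append] at he
    obtain ⟨-, he⟩ := replicate_append_cons_inj h01 he
    have hz : (0 : Fin 2) ∈ List.replicate m (1 : Fin 2) := by
      rw [← he]
      simp
    exact absurd (List.eq_of_mem_replicate hz) h01

/-- A factorization of `aʰbʰaʰbʰ` with short outer parts. -/
theorem factor_blocks {h : ℕ} {u q w : List (Fin 2)} (hu : u.length ≤ h) (hw : w.length ≤ h)
    (he : List.replicate h 0 ++ List.replicate h 1 ++ List.replicate h 0 ++ List.replicate h 1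
      = u ++ q ++ w) :
    u = List.replicate u.length 0 ∧ w = List.replicate w.length 1 ∧
    q = List.replicate (h - u.length) 0 ++ List.replicate h 1 ++ List.replicate h 0 ++
      List.replicate (h - w.length) 1 := by
  have e0 : List.replicate h (0 : Fin 2) =
      List.replicate u.length 0 ++ List.replicate (h - u.length) 0 := by
    rw [← List.replicate_add]; congr 1; omega
  have e1 : List.replicate h (1 : Fin 2) =
      List.replicate (h - w.length) 1 ++ List.replicate w.length 1 := by
    rw [← List.replicate_add]; congr 1; omega
  have he' : List.replicate u.length 0 ++ ((List.replicate (h - u.length) 0 ++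
      List.replicate h 1 ++ List.replicate h 0 ++ List.replicate (h - w.length) 1) ++
      List.replicate w.length 1) = u ++ (q ++ w) := by
    rw [← List.append_assoc u, ← he]
    conv_rhs => rw [List.append_assoc, List.append_assoc]
    conv_rhs =>
      congr
      · rw [e0]
      · congr
        · skip
        · congr
          · skip
          · rw [e1]
    simp only [List.append_assoc]
  obtain ⟨h1, h2⟩ := List.append_inj he' (by simp)
  obtain ⟨h3, h4⟩ := List.append_inj' h2 (by simp)
  exact ⟨h1.symm, h4.symm, h3.symm⟩

/-- If `H` is an infinite set of positive perfect squares, then `L_H` is not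
linear (Example 5). -/
theorem LH_not_linear (H : Set ℕ) (hinf : H.Infinite)
    (hsq : H ⊆ {n | ∃ m : ℕ, 1 ≤ m ∧ n = m ^ 2}) :
    ¬ IsLinearLang (LH H) := by
  rintro ⟨G, hG⟩
  obtain ⟨C, hC⟩ := exists_size_bound G.rules
  have key : ∀ n : ℕ, ∃ (B : G.NT) (h i j : ℕ), B ∈ G.rules.map LinearRule.input ∧
      i < h ∧ j < h ∧ n ≤ i + j ∧
      LinDerives G.rules B (List.replicate (h - i) 0 ++ List.replicate h 1 ++
        List.replicate h 0 ++ List.replicate (h - j) 1) ∧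
      ∀ q', LinDerives G.rules B q' → LinDerives G.rules G.start
        (List.replicate i 0 ++ q' ++ List.replicate j 1) := by
    intro n
    obtain ⟨h, hH, hlt⟩ := hinf.exists_gt (n + C)
    have hmem : List.replicate h 0 ++ List.replicate h 1 ++ List.replicate h 0 ++
        List.replicate h 1 ∈ LH H :=
      Or.inl ⟨h, h, by omega, by omega, Or.inl hH, rfl⟩
    have hder : LinDerives G.rules G.start _ := (hG _ (by
      intro h0
      have := congrArg List.length h0
      simp only [List.length_append, List.length_replicate, List.length_nil] at this
      omega)).1 hmem
    obtain ⟨B, u, q, w, he, hq, hcl, h1, h2⟩ := hder.exists_cut hC n (by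
      simp only [List.length_append, List.length_replicate]
      omega)
    obtain ⟨hu, hw, hq'⟩ := factor_blocks (by omega) (by omega) he
    refine ⟨B, h, u.length, w.length, hq.mem_inputs, by omega, by omega, h1, hq' ▸ hq, ?_⟩
    rw [← hu, ← hw]
    exact hcl
  choose B h i j hB hi hj hn hder hcl using key
  -- Infinitely many `n` share the same nonterminal.
  obtain ⟨N, -, hN⟩ : ∃ N ∈ {A | A ∈ G.rules.map LinearRule.input},
      {n | B n = N}.Infinite := by
    by_contra! hcon
    refine Set.infinite_univ (α := ℕ) (((List.finite_toSet (G.rules.map LinearRule.input)).biUnion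
      (t := fun N => {n | B n = N}) fun N hN => hcon N hN).subset fun n _ => ?_)
    exact Set.mem_biUnion (hB n) rfl
  obtain ⟨n, hnN⟩ := hN.nonempty
  obtain ⟨n', hnN', hlt⟩ := hN.exists_gt (i n + j n)
  simp only [Set.mem_ofPred_eq] at hnN' hnN
  -- The inner word for `n` inside the outer parts for `n'`.
  have hswap := hcl n' _ (by rw [hnN', ← hnN]; exact hder n)
  have hw : List.replicate (i n') 0 ++ (List.replicate (h n - i n) 0 ++ List.replicate (h n) 1 ++
      List.replicate (h n) 0 ++ List.replicate (h n - j n) 1) ++ List.replicate (j n') 1 =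
      List.replicate (i n' + (h n - i n)) (0 : Fin 2) ++ List.replicate (h n) 1 ++
      List.replicate (h n) 0 ++ List.replicate ((h n - j n) + j n') 1 := by
    simp only [List.replicate_add, List.append_assoc]
  rw [hw] at hswap
  have hin := hi n
  have hjn := hj n
  have hmem := (hG _ (by
    intro h0
    have := congrArg List.length h0
    simp only [List.length_append, List.length_replicate, List.length_nil] at this
    omega)).2 hswap
  obtain ⟨e1, e2⟩ := eq_of_mem_LH (by omega) (by omega) hmem
  have := hn n'
  omega
end

section
/- The language of palindromes over the alphabet {a, b}, i.e. L = { p ∈ {a,b}* : p equals its own reverse }, is not k-rated linear for any nonnegative rational k with k ≠ 1. -/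
/-- The language of palindromes over `{a, b}` (Example 10), with the alphabet
taken to be `Fin 2`. -/
def palindromes : Set (List (Fin 2)) := {p | p.reverse = p}

/-- The word `aⁿ b aⁿ`, with `a = 0` and `b = 1`. -/
def markedWord (n : ℕ) : List (Fin 2) := List.replicate n 0 ++ 1 :: List.replicate n 0

/-- The sentential form `U A W` is reachable from `S` and respects the rate `g/h`. Reachability is
encoded by its effect: any word derived from `A` may be inserted between `U` and `W`. -/
def RatedContext {T N : Type} (rs : List (LinearRule T N)) (g h : ℕ) (S : N)
    (U : List T) (A : N) (W : List T) : Prop :=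
  h * W.length = g * U.length ∧ ∀ p, LinDerives rs A p → LinDerives rs S (U ++ p ++ W)

/-- The total number of terminals in a production. -/
def ruleSize {T N : Type} (r : LinearRule T N) : ℕ :=
  Sum.elim List.length (fun x => x.1.length + x.2.2.length) r.output

lemma exists_ruleSize_bound {T N : Type} (rs : List (LinearRule T N)) :
    ∃ M, ∀ r ∈ rs, ruleSize r ≤ M :=
  ⟨(rs.map ruleSize).sum, fun _ hr => List.le_sum_of_mem (List.mem_map_of_mem hr)⟩

lemma markedWord_palindrome (n : ℕ) : markedWord n ∈ palindromes := by
  simp [markedWord, palindromes]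

lemma palindrome_one_marker {m n : ℕ}
    (hp : (List.replicate m 0 ++ 1 :: List.replicate n 0 : List (Fin 2)) ∈ palindromes) :
    m = n := by
  have h1 : (List.replicate n 0 ++ 1 :: List.replicate m 0 : List (Fin 2)) =
      List.replicate m 0 ++ 1 :: List.replicate n 0 := by
    simpa [palindromes] using hp
  have h2 := congrArg (List.idxOf 1) h1
  have key : ∀ k l : ℕ, List.idxOf 1
      (List.replicate k 0 ++ 1 :: List.replicate l 0 : List (Fin 2)) = k := by
    intro k l
    rw [List.idxOf_append_of_notMem (by simp [List.mem_replicate])]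
    simp
  rw [key, key] at h2
  exact h2.symm

lemma left_split {n t : ℕ} {U q W : List (Fin 2)} (hw : U ++ q ++ W = markedWord n)
    (hU : U.length = n + 1 + t) :
    U = List.replicate n 0 ++ 1 :: List.replicate t 0 ∧ q = List.replicate q.length 0 ∧
      W = List.replicate W.length 0 ∧ t + q.length + W.length = n := by
  have e : U ++ (q ++ W) = (List.replicate n 0 ++ [1]) ++ List.replicate n 0 := by
    simpa [markedWord] using hw
  have hc : ∃ c, U = (List.replicate n 0 ++ [1]) ++ c ∧
      List.replicate n 0 = c ++ (q ++ W) := by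
    rcases List.append_eq_append_iff.1 e with ⟨c, h1, h2⟩ | ⟨c, h1, h2⟩
    · have h3 := congrArg List.length h1
      simp at h3
      have : c = [] := List.length_eq_zero_iff.1 (by omega)
      subst this
      exact ⟨[], by simpa using h1.symm, by simpa using h2.symm⟩
    · exact ⟨c, h1, h2⟩
  obtain ⟨c, h1, h2⟩ := hc
  obtain ⟨hl, hc, hqW⟩ := List.append_eq_replicate_iff.1 h2.symm
  obtain ⟨-, hq, hW⟩ := List.append_eq_replicate_iff.1 hqW
  have hct : c.length = t := by
    have h3 := congrArg List.length h1
    simp at h3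
    omega
  rw [hct] at hc
  refine ⟨by rw [h1, hc]; simp, hq, hW, ?_⟩
  simp at hl
  omega

lemma right_split {n t : ℕ} {U q W : List (Fin 2)} (hw : U ++ q ++ W = markedWord n)
    (hW : W.length = n + 1 + t) :
    W = List.replicate t 0 ++ 1 :: List.replicate n 0 ∧ q = List.replicate q.length 0 ∧
      U = List.replicate U.length 0 ∧ t + q.length + U.length = n := by
  have e : W.reverse ++ q.reverse ++ U.reverse = markedWord n := by
    have := congrArg List.reverse hw
    have hp : (markedWord n).reverse = markedWord n := markedWord_palindrome n
    rw [hp] at this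
    simpa using this
  obtain ⟨h1, h2, h3, h4⟩ := left_split e (by simpa using hW)
  refine ⟨?_, ?_, ?_, by simpa using h4⟩
  · simpa using congrArg List.reverse h1
  · simpa using congrArg List.reverse h2
  · simpa using congrArg List.reverse h3

lemma eq_of_rate {g h n₁ n₂ x₁ x₂ y₁ y₂ : ℕ} (hne : g ≠ h) (h1 : h * y₁ = g * x₁)
    (h2 : h * y₂ = g * x₂) (hx : x₁ + n₂ = x₂ + n₁) (hy : y₁ + n₂ = y₂ + n₁) : n₁ = n₂ := by
  zify at *
  have e : ((h : ℤ) - g) * (n₁ - n₂) = 0 := by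
    have ex : (n₁ : ℤ) - n₂ = x₁ - x₂ := by linarith
    have ey : (n₁ : ℤ) - n₂ = y₁ - y₂ := by linarith
    calc ((h : ℤ) - g) * (n₁ - n₂) = h * (n₁ - n₂) - g * (n₁ - n₂) := by ring
      _ = h * (y₁ - y₂) - g * (x₁ - x₂) := by rw [← ex, ← ey]
      _ = 0 := by linarith
  rcases mul_eq_zero.1 e with h0 | h0
  · exact absurd (by linarith) hne
  · linarith

/-- Exchanging the inner blocks of two words whose marker lies in the left context, at the same
distance `t` from its inner end, gives a palindrome only if the two words are equal. -/
lemma left_exchange {g h n₁ n₂ t : ℕ} {U₁ q₁ W₁ U₂ q₂ W₂ : List (Fin 2)} (hne : g ≠ h)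
    (r1 : h * W₁.length = g * U₁.length) (r2 : h * W₂.length = g * U₂.length)
    (w1 : U₁ ++ q₁ ++ W₁ = markedWord n₁) (w2 : U₂ ++ q₂ ++ W₂ = markedWord n₂)
    (l1 : U₁.length = n₁ + 1 + t) (l2 : U₂.length = n₂ + 1 + t)
    (hp : U₁ ++ q₂ ++ W₁ ∈ palindromes) : n₁ = n₂ := by
  obtain ⟨a1, a2, a3, a4⟩ := left_split w1 l1
  obtain ⟨b1, b2, b3, b4⟩ := left_split w2 l2
  have e : U₁ ++ q₂ ++ W₁ = List.replicate n₁ 0 ++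
      1 :: List.replicate (t + q₂.length + W₁.length) 0 := by
    rw [List.replicate_add, List.replicate_add, ← b2, ← a3, a1]
    simp
  rw [e] at hp
  have := palindrome_one_marker hp
  exact eq_of_rate hne r1 r2 (by omega) (by omega)

/-- The mirror image of `left_exchange`, with the marker in the right context. -/
lemma right_exchange {g h n₁ n₂ t : ℕ} {U₁ q₁ W₁ U₂ q₂ W₂ : List (Fin 2)} (hne : g ≠ h)
    (r1 : h * W₁.length = g * U₁.length) (r2 : h * W₂.length = g * U₂.length)
    (w1 : U₁ ++ q₁ ++ W₁ = markedWord n₁) (w2 : U₂ ++ q₂ ++ W₂ = markedWord n₂)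
    (l1 : W₁.length = n₁ + 1 + t) (l2 : W₂.length = n₂ + 1 + t)
    (hp : U₁ ++ q₂ ++ W₁ ∈ palindromes) : n₁ = n₂ := by
  refine left_exchange hne.symm (U₁ := W₁.reverse) (q₁ := q₁.reverse) (W₁ := U₁.reverse)
    (U₂ := W₂.reverse) (q₂ := q₂.reverse) (W₂ := U₂.reverse) (t := t)
    (by simpa using r1.symm) (by simpa using r2.symm) ?_ ?_ (by simpa using l1)
    (by simpa using l2) ?_
  · have hm : (markedWord n₁).reverse = markedWord n₁ := markedWord_palindrome n₁
    rw [← hm, ← w1]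
    simp
  · have hm : (markedWord n₂).reverse = markedWord n₂ := markedWord_palindrome n₂
    rw [← hm, ← w2]
    simp
  · have hr : (U₁ ++ q₂ ++ W₁).reverse = U₁ ++ q₂ ++ W₁ := hp
    have e : W₁.reverse ++ q₂.reverse ++ U₁.reverse = (U₁ ++ q₂ ++ W₁).reverse := by simp
    rw [e, hr]
    exact hp

/-- If neither context reaches the centre, the block `v` between them has length `≤ M` only for
small `n`, since the rate `g/h ≠ 1` makes the lengths of the contexts differ proportionally. -/
lemma terminal_bound {g h n x y v M : ℕ} (hne : g ≠ h) (hr : h * y = g * x)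
    (hx : x ≤ n) (hy : y ≤ n) (hv : v ≤ M) (hl : x + v + y = 2 * n + 1) : n ≤ (g + h) * M := by
  rcases Nat.lt_or_gt_of_ne hne with hlt | hlt
  · have : n ≤ y + M := by omega
    obtain ⟨d, rfl⟩ := Nat.exists_eq_add_of_lt hlt
    nlinarith [Nat.mul_le_mul_left (g + d + 1) this, Nat.mul_le_mul_left g hx,
      Nat.zero_le (d * n), Nat.zero_le (g * M)]
  · have : n ≤ x + M := by omega
    obtain ⟨d, rfl⟩ := Nat.exists_eq_add_of_lt hlt
    nlinarith [Nat.mul_le_mul_left (h + d + 1) this, Nat.mul_le_mul_left h hy,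
      Nat.zero_le (d * n), Nat.zero_le (h * M)]

/-- A derivation of `aⁿ b aⁿ` with `n` large contains a production `r` that creates the
central `b` inside its left (`s = true`) or right (`s = false`) terminal word, leaving `b` at
distance `t ≤ M` from the inner end of the corresponding context. -/
lemma exists_crossing {N : Type} {rs : List (LinearRule (Fin 2) N)} {g h M n : ℕ} {S A : N}
    (hne : g ≠ h)
    (hrate : ∀ r ∈ rs, ∀ u w, ∀ B : N, r.output = Sum.inr (u, B, w) →
      h * w.length = g * u.length)
    (hM : ∀ r ∈ rs, ruleSize r ≤ M) (hn : (g + h) * M < n) {p : List (Fin 2)}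
    (hd : LinDerives rs A p) :
    ∀ U W, RatedContext rs g h S U A W → U ++ p ++ W = markedWord n → U.length ≤ n →
      W.length ≤ n →
      ∃ r ∈ rs, ∃ u w B U' W' q, ∃ t ≤ M, ∃ s : Bool, r.output = Sum.inr (u, B, w) ∧
        RatedContext rs g h S U' B W' ∧ LinDerives rs B q ∧ U' ++ q ++ W' = markedWord n ∧
        (bif s then U'.length else W'.length) = n + 1 + t := by
  induction hd with
  | @terminal A v hr =>
    intro U W hc hw hU hW
    have hv : v.length ≤ M := hM _ hr
    have hl := congrArg List.length hw
    simp [markedWord] at hl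
    have := terminal_bound hne hc.1 hU hW hv (by omega)
    omega
  | @step A B u w q hr hq ih =>
    intro U W hc hw hU hW
    have hs : u.length + w.length ≤ M := hM _ hr
    have hc' : RatedContext rs g h S (U ++ u) B (w ++ W) := by
      refine ⟨?_, fun p hp => ?_⟩
      · have := hrate _ hr u w B rfl
        simp only [List.length_append, mul_add, this, hc.1]
        ring
      · simpa using hc.2 _ (LinDerives.step hr hp)
    have hw' : U ++ u ++ q ++ (w ++ W) = markedWord n := by simpa using hw
    by_cases h1 : (U ++ u).length ≤ n
    · by_cases h2 : (w ++ W).length ≤ n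
      · exact ih _ _ hc' hw' h1 h2
      · refine ⟨_, hr, u, w, B, _, _, q, (w ++ W).length - (n + 1), ?_, false, rfl, hc', hq,
          hw', ?_⟩
        · simp; omega
        · simp at h2 ⊢; omega
    · refine ⟨_, hr, u, w, B, _, _, q, (U ++ u).length - (n + 1), ?_, true, rfl, hc', hq,
        hw', ?_⟩
      · simp; omega
      · simp at h1 ⊢; omega

/-- The language of palindromes over `{a, b}` is not `k`-rated linear for any
nonnegative rational `k = g/h` with `k ≠ 1` (Example 10).  (Since `g` and `h`
are coprime, `g/h ≠ 1` is expressed by `g ≠ h`.) -/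
theorem palindromes_not_rated_linear (g h : ℕ) (hgh : Nat.Coprime g h) (hh : h ≠ 0)
    (hne : g ≠ h) : ¬ IsRatedLinearLang g h palindromes := by
  rintro ⟨G, hrate, hgen⟩
  obtain ⟨M, hM⟩ := exists_ruleSize_bound G.rules
  have hcross : ∀ m : ℕ, ∃ c : {r // r ∈ G.rules} × Fin (M + 1) × Bool, ∃ u w B U W q,
      c.1.1.output = Sum.inr (u, B, w) ∧ RatedContext G.rules g h G.start U B W ∧
      LinDerives G.rules B q ∧ U ++ q ++ W = markedWord (m + (g + h) * M + 1) ∧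
      (bif c.2.2 then U.length else W.length) = m + (g + h) * M + 1 + 1 + c.2.1 := by
    intro m
    have hd : LinDerives G.rules G.start (markedWord (m + (g + h) * M + 1)) :=
      (hgen _ (by simp [markedWord])).1 (markedWord_palindrome _)
    obtain ⟨r, hr, u, w, B, U, W, q, t, ht, s, h1, h2, h3, h4, h5⟩ :=
      exists_crossing (n := m + (g + h) * M + 1) (S := G.start) hne hrate hM (by omega) hd [] []
        ⟨by simp, fun p hp => by simpa using hp⟩ (by simp) (by simp) (by simp)
    exact ⟨(⟨r, hr⟩, ⟨t, by omega⟩, s), u, w, B, U, W, q, h1, h2, h3, h4, h5⟩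
  choose c hc using hcross
  have : Finite {r // r ∈ G.rules} := List.finite_toSet G.rules
  obtain ⟨m₁, m₂, hm, hcc⟩ := Finite.exists_ne_map_eq_of_infinite c
  obtain ⟨u₁, w₁, B₁, U₁, W₁, q₁, o1, c1, d1, e1, l1⟩ := hc m₁
  obtain ⟨u₂, w₂, B₂, U₂, W₂, q₂, o2, c2, d2, e2, l2⟩ := hc m₂
  rw [← hcc] at o2 l2
  have hB : B₁ = B₂ := by
    rw [o1] at o2
    simp at o2
    exact o2.2.1
  subst hB
  -- The marker lies in one of the contexts, so the exchanged word is nonempty.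
  have hne' : U₁ ++ q₂ ++ W₁ ≠ [] := by
    intro h0
    simp at h0
    obtain ⟨rfl, -, rfl⟩ := h0
    simp at l1
    omega
  have hp : U₁ ++ q₂ ++ W₁ ∈ palindromes := (hgen _ hne').2 (c1.2 _ d2)
  apply hm
  cases hs : (c m₁).2.2 with
  | true =>
    rw [hs] at l1 l2
    have := left_exchange hne c1.1 c2.1 e1 e2 l1 l2 hp
    omega
  | false =>
    rw [hs] at l1 l2
    have := right_exchange hne c1.1 c2.1 e1 e2 l1 l2 hp
    omega
end
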